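/- arXiv:math/0308086 — 5 statements merged into one kernel-verified Lean document; each statement's English description precedes it below -/
import Mathlib

section
/- For every real z > 0, 2 ∫₀^∞ arctan(x/z)/(e^{2πx} + 1) dx = z·log z − z + (1/2)·log(2π) − log Γ(z + 1/2). -/
open Real MeasureTheory Filter

/-- Hurwitz zeta function ζ(s, a) for real a > 0, via analytic continuation. -/
noncomputable def hurwitzZetaReal (s : ℂ) (a : ℝ) : ℂ :=
  HurwitzZeta.hurwitzZeta (a : UnitAddCircle) s -
    ∑ k ∈ Finset.range (⌈a⌉₊ - 1), ((a - (⌈a⌉₊ - 1) + k : ℝ) : ℂ) ^ (-s)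

/-- ζ'(-1, a): derivative of the Hurwitz zeta function w.r.t. s at s = -1. -/
noncomputable def hurwitzZetaDerivNegOne (a : ℝ) : ℂ :=
  deriv (fun s => hurwitzZetaReal s a) (-1)

/-- Logarithm of the Glaisher–Kinkelin constant: log A = 1/12 - ζ'(-1). -/
noncomputable def logA : ℂ := 1 / 12 - deriv riemannZeta (-1)

/-- log G(z+1) for z > 0, via log G(z+1) = z log Γ(z) + ζ'(-1) - ζ'(-1, z). -/
noncomputable def logBarnesG1p (z : ℝ) : ℂ :=
  z * Real.log (Real.Gamma z) + deriv riemannZeta (-1) - hurwitzZetaDerivNegOne z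

/-- log G(x) for x > 0, via the recurrence G(z+1) = Γ(z) G(z) on (0, 1]. -/
noncomputable def logBarnesG (x : ℝ) : ℂ :=
  if x ≤ 1 then logBarnesG1p x - Real.log (Real.Gamma x) else logBarnesG1p (x - 1)

/-- The Barnes G-function (for positive real argument). -/
noncomputable def barnesG (x : ℝ) : ℂ := Complex.exp (logBarnesG x)

/-- The digamma function ψ = (log Γ)'. -/
noncomputable def digamma (x : ℝ) : ℝ := deriv (fun t => Real.log (Real.Gamma t)) x

/-- The trigamma function ψ⁽¹⁾ = (log Γ)''. -/
noncomputable def trigamma (x : ℝ) : ℝ :=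
  deriv (deriv (fun t => Real.log (Real.Gamma t))) x

/-- The Clausen function Cl₂(x) = ∑_{k ≥ 1} sin(k x) / k². -/
noncomputable def clausen2 (x : ℝ) : ℝ := ∑' k : ℕ, Real.sin ((k + 1) * x) / (k + 1) ^ 2

/-- Catalan's constant. -/
noncomputable def catalanConst : ℝ := ∑' k : ℕ, (-1 : ℝ) ^ k / (2 * (k : ℝ) + 1) ^ 2


lemma aux_hs {E : Type*} [AddCommMonoid E] [TopologicalSpace E] {f g : ℕ → E} {a b : E}
    (h : HasSum f a) (hfg : ∀ n, g n = f n) (hab : b = a) : HasSum g b := by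
  obtain rfl : g = f := funext hfg
  rwa [hab]

lemma aux_sin_int {a : ℝ} (ha : 0 < a) (t : ℝ) :
    ∫ x in Set.Ioi (0:ℝ), Real.exp (-a * x) * Real.sin (t * x) = t / (a ^ 2 + t ^ 2) := by
  have hre : (-(a:ℂ) + t * Complex.I).re < 0 := by simpa using ha
  have h1 := integral_exp_mul_complex_Ioi hre 0
  have h2 := integrableOn_exp_mul_complex_Ioi hre 0
  have h3 := integral_im h2
  have h4 : ∀ x : ℝ, Real.exp (-a * x) * Real.sin (t * x)
      = RCLike.im (Complex.exp ((-(a:ℂ) + t * Complex.I) * x)) := by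
    intro x
    simp [Complex.exp_im]
  simp_rw [h4]
  rw [h3, h1]
  simp [Complex.div_im, Complex.normSq_apply]
  have : a ^ 2 + t ^ 2 ≠ 0 := by positivity
  have : a * a + t * t ≠ 0 := by nlinarith [sq_nonneg t, sq_pos_of_pos ha]
  field_simp
  try ring

lemma aux_x_exp {a : ℝ} (ha : 0 < a) :
    IntegrableOn (fun x : ℝ => x * Real.exp (-a * x)) (Set.Ioi 0) ∧
    ∫ x in Set.Ioi (0:ℝ), x * Real.exp (-a * x) = 1 / a ^ 2 := by
  constructor
  · have := integrableOn_rpow_mul_exp_neg_mul_rpow (p := 1) (s := 1) (b := a) (by norm_num) (by norm_num) ha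
    simpa using this
  · have := Real.integral_rpow_mul_exp_neg_mul_Ioi (a := 2) (r := a) (by norm_num) ha
    norm_num at this
    simpa using this

lemma aux_coth {y : ℝ} (hy : 0 < y) :
    HasSum (fun n : ℕ => 2 * y / (y ^ 2 + ((n:ℝ) + 1) ^ 2))
      (π * (Real.cosh (π * y) / Real.sinh (π * y)) - 1 / y) := by
  have hx : (Complex.I * y) ∈ Complex.integerComplement := by
    rw [Complex.mem_integerComplement_iff]
    rintro ⟨n, hn⟩
    have := congrArg Complex.im hn
    simp at this
    exact hy.ne this
  have h1 := cot_series_rep' hx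
  have h2 := (summable_cotTerm hx).hasSum
  have h3 : HasSum (fun n : ℕ => cotTerm (Complex.I * y) n) (π * Complex.cot (π * (Complex.I * y)) - 1 / (Complex.I * y)) := by
    rw [h1]; exact h2
  have h4 := h3.mul_left Complex.I
  rw [← Complex.hasSum_ofReal]
  have hs : Complex.sinh (π * y) ≠ 0 := by
    rw [← Complex.ofReal_mul, ← Complex.ofReal_sinh, Complex.ofReal_ne_zero]
    exact (Real.sinh_pos_iff.2 (by positivity)).ne'
  have hyc : (y:ℂ) ≠ 0 := by exact_mod_cast hy.ne'
  refine aux_hs h4 ?_ ?_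
  · intro n
    rw [cotTerm_identity hx]
    have : (Complex.I * y + (n + 1)) * (Complex.I * y - (n + 1)) = -((y:ℂ) ^ 2 + ((n:ℂ) + 1) ^ 2) := by
      linear_combination (y:ℂ)^2 * Complex.I_sq
    rw [this]
    have h0 : (y:ℂ) ^ 2 + ((n:ℂ) + 1) ^ 2 ≠ 0 := by
      have : (y^2 + ((n:ℝ)+1)^2) ≠ 0 := by positivity
      exact_mod_cast this
    push_cast
    field_simp
    linear_combination (1 : ℂ) * Complex.I_sq
  · rw [Complex.cot_eq_cos_div_sin, show (π:ℂ) * (Complex.I * y) = (π * y) * Complex.I by ring,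
      Complex.cos_mul_I, Complex.sin_mul_I]
    push_cast
    field_simp [Complex.I_ne_zero]

lemma aux_alt {f : ℕ → ℝ} {T O : ℝ} (hT : HasSum f T) (hO : HasSum (fun k => f (2 * k + 1)) O) :
    HasSum (fun n => (-1 : ℝ) ^ n * f n) (T - 2 * O) := by
  let g : ℕ → ℝ := fun n => (1 - (-1 : ℝ) ^ n) * f n
  have he : HasSum (fun k : ℕ => g (2 * k)) 0 := by
    refine aux_hs hasSum_zero (fun k => ?_) rfl
    simp [g, pow_mul]
  have ho : HasSum (fun k : ℕ => g (2 * k + 1)) (2 * O) := by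
    refine aux_hs (hO.mul_left 2) (fun k => ?_) rfl
    simp only [g, pow_succ, pow_mul]
    norm_num
  refine aux_hs (hT.sub (he.even_add_odd ho)) (fun n => ?_) ?_
  · simp only [g]; ring
  · ring

lemma aux_csch {y : ℝ} (hy : 0 < y) :
    HasSum (fun n : ℕ => (-1 : ℝ) ^ n * (2 * y / (y ^ 2 + ((n:ℝ) + 1) ^ 2)))
      (1 / y - π / Real.sinh (π * y)) := by
  have hT := aux_coth hy
  have hO := (aux_coth (half_pos hy)).mul_left (1 / 2)
  have hO' : HasSum (fun k : ℕ => 2 * y / (y ^ 2 + (((2 * k + 1 : ℕ):ℝ) + 1) ^ 2))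
      (1 / 2 * (π * (Real.cosh (π * (y / 2)) / Real.sinh (π * (y / 2))) - 1 / (y / 2))) := by
    refine aux_hs hO (fun k => ?_) rfl
    push_cast
    rw [show y ^ 2 + ((2 * (k:ℝ) + 1) + 1) ^ 2 = 4 * ((y / 2) ^ 2 + ((k:ℝ) + 1) ^ 2) by ring]
    have h2 : (y / 2) ^ 2 + ((k:ℝ) + 1) ^ 2 ≠ 0 := by positivity
    generalize (y / 2) ^ 2 + ((k:ℝ) + 1) ^ 2 = q at h2
    field_simp
    norm_num
  refine aux_hs (aux_alt hT hO') (fun n => rfl) ?_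
  have hs : 0 < Real.sinh (π * (y / 2)) := Real.sinh_pos_iff.2 (by positivity)
  have hc := Real.cosh_pos (π * (y / 2))
  rw [show π * y = 2 * (π * (y / 2)) by ring, Real.sinh_two_mul, Real.cosh_two_mul]
  have h3 := Real.cosh_sq (π * (y / 2))
  generalize Real.sinh (π * (y / 2)) = S at *
  generalize Real.cosh (π * (y / 2)) = C at *
  have hp := pi_pos
  generalize π = p at *
  field_simp
  linear_combination (y * p) * h3

lemma aux_sine_transform {t : ℝ} (ht : 0 < t) :
    ∫ x in Set.Ioi (0:ℝ), Real.sin (t * x) / (Real.exp (2 * π * x) + 1)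
      = 1 / (2 * t) - 1 / (4 * Real.sinh (t / 2)) := by
  have ha : ∀ k : ℕ, 0 < 2 * π * ((k:ℝ) + 1) := fun k => by positivity
  let F : ℕ → ℝ → ℝ := fun k x => (-1 : ℝ) ^ k * (Real.exp (-(2 * π * ((k:ℝ) + 1)) * x) * Real.sin (t * x))
  have hFb : ∀ k, ∀ x ∈ Set.Ioi (0:ℝ), ‖F k x‖ ≤ t * (x * Real.exp (-(2 * π * ((k:ℝ) + 1)) * x)) := by
    intro k x hx
    have hx' : 0 < x := hx
    simp only [F, norm_mul, norm_pow, norm_neg, norm_one, one_pow, one_mul, Real.norm_eq_abs, Real.abs_exp]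
    have : |Real.sin (t * x)| ≤ t * x := by
      have := Real.abs_sin_le_abs (x := t * x)
      rwa [abs_of_pos (mul_pos ht hx')] at this
    nlinarith [Real.exp_pos (-(2 * π * ((k:ℝ) + 1)) * x)]
  have hFi : ∀ k, IntegrableOn (F k) (Set.Ioi 0) := by
    intro k
    refine Integrable.mono' ((aux_x_exp (ha k)).1.const_mul t) ?_ ?_
    · apply Continuous.aestronglyMeasurable
      fun_prop
    · exact (ae_restrict_iff' measurableSet_Ioi).2 (ae_of_all _ (hFb k))
  have hsum : Summable fun k => ∫ x in Set.Ioi (0:ℝ), ‖F k x‖ := by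
    refine Summable.of_nonneg_of_le (fun k => integral_nonneg (fun x => norm_nonneg _))
      (f := fun k : ℕ => t / (2 * π) ^ 2 * (1 / ((k:ℝ) + 1) ^ 2)) (fun k => ?_) ?_
    · calc _ ≤ ∫ x in Set.Ioi (0:ℝ), t * (x * Real.exp (-(2 * π * ((k:ℝ) + 1)) * x)) :=
            setIntegral_mono_on (hFi k).norm ((aux_x_exp (ha k)).1.const_mul t) measurableSet_Ioi (hFb k)
        _ = _ := by
            rw [integral_const_mul, (aux_x_exp (ha k)).2]
            field_simp
    · apply Summable.mul_left
      have := (summable_nat_add_iff 1).2 (Real.summable_one_div_nat_pow.2 (one_lt_two))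
      simpa using this
  have h1 := hasSum_integral_of_summable_integral_norm hFi hsum
  have h2 : ∫ x in Set.Ioi (0:ℝ), (∑' k, F k x) = ∫ x in Set.Ioi (0:ℝ), Real.sin (t * x) / (Real.exp (2 * π * x) + 1) := by
    refine setIntegral_congr_fun measurableSet_Ioi (fun x hx => ?_)
    have hx' : 0 < x := hx
    have hq : Real.exp (-(2 * π * x)) < 1 := by
      rw [Real.exp_lt_one_iff]; have := pi_pos; nlinarith [mul_pos this hx']
    have hg := (hasSum_geometric_of_norm_lt_one (ξ := -Real.exp (-(2 * π * x)))
      (by rw [norm_neg, Real.norm_eq_abs, Real.abs_exp]; exact hq)).mul_left (Real.sin (t * x) * Real.exp (-(2 * π * x)))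
    have hgF : HasSum (fun k => F k x) (Real.sin (t * x) * Real.exp (-(2 * π * x)) * (1 - -Real.exp (-(2 * π * x)))⁻¹) := by
      refine aux_hs hg (fun k => ?_) rfl
      simp only [F]
      rw [neg_pow (Real.exp _), ← Real.exp_nat_mul, show -(2 * π * ((k:ℝ) + 1)) * x = -(2 * π * x) + k * (-(2 * π * x)) by ring, Real.exp_add]
      ring
    show ∑' k, F k x = _
    rw [hgF.tsum_eq, Real.exp_neg]
    have := Real.exp_pos (2 * π * x)
    rw [sub_neg_eq_add, show 1 + (Real.exp (2 * π * x))⁻¹ = (Real.exp (2 * π * x) + 1) / Real.exp (2 * π * x) by field_simp]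
    field_simp
  rw [h2] at h1
  have h3 := (aux_csch (y := t / (2 * π)) (by positivity)).mul_left (1 / (4 * π))
  refine h1.unique ?_
  refine aux_hs h3 ?_ ?_
  · intro k
    simp only [F]
    rw [integral_const_mul, aux_sin_int (ha k)]
    have h5 : (t / (2 * π)) ^ 2 + ((k:ℝ) + 1) ^ 2 ≠ 0 := by positivity
    have h6 : (2 * π * ((k:ℝ) + 1)) ^ 2 + t ^ 2 ≠ 0 := by positivity
    field_simp
    try ring
  · rw [show π * (t / (2 * π)) = t / 2 by field_simp]
    have hs : 0 < Real.sinh (t / 2) := Real.sinh_pos_iff.2 (by positivity)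
    field_simp
    try ring

lemma aux_w_le (x : ℝ) : 1 / (Real.exp (2 * π * x) + 1) ≤ Real.exp (-(2 * π) * x) := by
  rw [show -(2 * π) * x = -(2 * π * x) by ring, Real.exp_neg, ← one_div]
  exact one_div_le_one_div_of_le (Real.exp_pos _) (by linarith)

lemma aux_arctan_le {x : ℝ} (hx : 0 ≤ x) : Real.arctan x ≤ x := by
  by_cases h : x < π / 2
  · have h1 := Real.le_tan hx h
    calc Real.arctan x ≤ Real.arctan (Real.tan x) := Real.arctan_le_arctan_iff.2 h1
      _ = x := Real.arctan_tan (by linarith [pi_pos]) h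
  · exact (Real.arctan_lt_pi_div_two x).le.trans (not_lt.1 h)

lemma aux_F_bound {z x : ℝ} (hz : 0 < z) (hx : 0 < x) :
    ‖Real.arctan (x / z) / (Real.exp (2 * π * x) + 1)‖ ≤ (1 / z) * (x * Real.exp (-(2 * π) * x)) := by
  have h0 : 0 < x / z := by positivity
  have h1 : 0 ≤ Real.arctan (x / z) := Real.arctan_nonneg.2 h0.le
  rw [Real.norm_of_nonneg (by positivity), div_eq_mul_one_div]
  calc _ ≤ (x / z) * Real.exp (-(2 * π) * x) :=
        mul_le_mul (aux_arctan_le h0.le) (aux_w_le x) (by positivity) h0.le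
    _ = _ := by ring

lemma aux_F_int {z : ℝ} (hz : 0 < z) :
    IntegrableOn (fun x => Real.arctan (x / z) / (Real.exp (2 * π * x) + 1)) (Set.Ioi 0) := by
  refine Integrable.mono' ((aux_x_exp (a := 2 * π) (by positivity)).1.const_mul (1 / z)) ?_ ?_
  · exact Measurable.aestronglyMeasurable (by fun_prop)
  · exact (ae_restrict_iff' measurableSet_Ioi).2 (ae_of_all _ (fun x hx => aux_F_bound hz hx))

lemma aux_J_deriv {z : ℝ} (hz : 0 < z) :
    HasDerivAt (fun s : ℝ => ∫ x in Set.Ioi (0:ℝ), Real.arctan (x / s) / (Real.exp (2 * π * x) + 1))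
      (∫ x in Set.Ioi (0:ℝ), -(x / (z ^ 2 + x ^ 2)) / (Real.exp (2 * π * x) + 1)) z := by
  refine (hasDerivAt_integral_of_dominated_loc_of_deriv_le (s := Set.Ioi (z / 2)) (μ := volume.restrict (Set.Ioi (0:ℝ)))
    (F := fun s x => Real.arctan (x / s) / (Real.exp (2 * π * x) + 1))
    (F' := fun s x => -(x / (s ^ 2 + x ^ 2)) / (Real.exp (2 * π * x) + 1))
    (bound := fun x => (4 / z ^ 2) * (x * Real.exp (-(2 * π) * x)))
    (Ioi_mem_nhds (by linarith)) ?_ (aux_F_int hz) ?_ ?_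
    ((aux_x_exp (a := 2 * π) (by positivity)).1.const_mul _) ?_).2
  · exact Eventually.of_forall fun s => Measurable.aestronglyMeasurable (by fun_prop)
  · exact Measurable.aestronglyMeasurable (by fun_prop)
  · refine (ae_restrict_iff' measurableSet_Ioi).2 (ae_of_all _ (fun x hx s hs => ?_))
    have hx' : 0 < x := hx
    have hs' : z / 2 < s := hs
    have hs0 : 0 < s := by linarith
    rw [neg_div, norm_neg, Real.norm_of_nonneg (by positivity), div_eq_mul_one_div (x / _)]
    calc _ ≤ (x * (4 / z ^ 2)) * Real.exp (-(2 * π) * x) := by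
          refine mul_le_mul ?_ (aux_w_le x) (by positivity) (by positivity)
          rw [div_eq_mul_one_div x]
          refine mul_le_mul_of_nonneg_left ?_ hx'.le
          rw [div_le_div_iff₀ (by positivity) (by positivity)]
          nlinarith [sq_nonneg x]
      _ = _ := by ring
  · refine (ae_restrict_iff' measurableSet_Ioi).2 (ae_of_all _ (fun x hx s hs => ?_))
    have hs' : z / 2 < s := hs
    have hs0 : 0 < s := by linarith
    have h1 : HasDerivAt (fun s : ℝ => x / s) (x * (-(s ^ 2)⁻¹)) s := by
      simpa [div_eq_mul_inv] using (hasDerivAt_inv hs0.ne').const_mul x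
    have h2 := (h1.arctan).div_const (Real.exp (2 * π * x) + 1)
    have h3 : 1 / (1 + (x / s) ^ 2) * (x * (-(s ^ 2)⁻¹)) = -(x / (s ^ 2 + x ^ 2)) := by
      have : s ^ 2 + x ^ 2 ≠ 0 := by positivity
      field_simp
    rw [h3] at h2
    exact h2

lemma aux_fubini {z : ℝ} (hz : 0 < z) :
    IntegrableOn (fun t => Real.exp (-z * t) * (1 / (2 * t) - 1 / (4 * Real.sinh (t / 2)))) (Set.Ioi 0) ∧
    ∫ x in Set.Ioi (0:ℝ), -(x / (z ^ 2 + x ^ 2)) / (Real.exp (2 * π * x) + 1)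
      = - ∫ t in Set.Ioi (0:ℝ), Real.exp (-z * t) * (1 / (2 * t) - 1 / (4 * Real.sinh (t / 2))) := by
  let f : ℝ → ℝ → ℝ := fun x t => Real.exp (-z * t) * (Real.sin (t * x) / (Real.exp (2 * π * x) + 1))
  have hf : Integrable (Function.uncurry f)
      ((volume.restrict (Set.Ioi (0:ℝ))).prod (volume.restrict (Set.Ioi (0:ℝ)))) := by
    have hb := (aux_x_exp (a := 2 * π) (by positivity)).1.mul_prod (aux_x_exp hz).1
    refine Integrable.mono' hb ?_ ?_
    · apply Measurable.aestronglyMeasurable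
      simp only [f, Function.uncurry_def]
      fun_prop
    · rw [Measure.prod_restrict]
      refine (ae_restrict_iff' (measurableSet_Ioi.prod measurableSet_Ioi)).2 (ae_of_all _ ?_)
      rintro ⟨x, t⟩ ⟨hx, ht⟩
      have hx' : 0 < x := hx
      have ht' : 0 < t := ht
      simp only [f, Function.uncurry_def]
      have h1 : |Real.sin (t * x)| ≤ t * x := by
        have := Real.abs_sin_le_abs (x := t * x)
        rwa [abs_of_pos (mul_pos ht' hx')] at this
      have h2 : 0 < Real.exp (2 * π * x) + 1 := by positivity
      rw [norm_mul, norm_div, Real.norm_eq_abs, Real.abs_exp, Real.norm_eq_abs, Real.norm_of_nonneg h2.le,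
        div_eq_mul_one_div |Real.sin (t * x)|]
      calc _ ≤ Real.exp (-z * t) * ((t * x) * Real.exp (-(2 * π) * x)) := by
            refine mul_le_mul_of_nonneg_left ?_ (Real.exp_pos _).le
            exact mul_le_mul h1 (aux_w_le x) (by positivity) (by positivity)
        _ = _ := by ring
  have hin : ∀ t ∈ Set.Ioi (0:ℝ), ∫ x in Set.Ioi (0:ℝ), f x t
      = Real.exp (-z * t) * (1 / (2 * t) - 1 / (4 * Real.sinh (t / 2))) := by
    intro t ht
    simp only [f]
    rw [integral_const_mul, aux_sine_transform ht]
  constructor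
  · have := hf.integral_prod_right
    exact IntegrableOn.congr_fun this hin measurableSet_Ioi
  · rw [← setIntegral_congr_fun measurableSet_Ioi hin, ← integral_integral_swap hf, ← integral_neg]
    refine setIntegral_congr_fun measurableSet_Ioi (fun x hx => ?_)
    simp only [f]
    have : ∀ t, Real.exp (-z * t) * (Real.sin (t * x) / (Real.exp (2 * π * x) + 1))
        = (1 / (Real.exp (2 * π * x) + 1)) * (Real.exp (-z * t) * Real.sin (x * t)) := by
      intro t; rw [mul_comm t x]; ring
    simp_rw [this]
    rw [integral_const_mul, aux_sin_int hz]
    ring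

lemma aux_diff {z : ℝ} (hz : 0 < z) :
    (∫ t in Set.Ioi (0:ℝ), Real.exp (-z * t) * (1 / (2 * t) - 1 / (4 * Real.sinh (t / 2))))
    - (∫ t in Set.Ioi (0:ℝ), Real.exp (-(z + 1) * t) * (1 / (2 * t) - 1 / (4 * Real.sinh (t / 2))))
    = (Real.log (z + 1) - Real.log z) / 2 - 1 / (2 * (z + 1 / 2)) := by
  have hz1 : 0 < z + 1 := by linarith
  have i1 := (aux_fubini hz).1
  have i2 := (aux_fubini hz1).1
  have hzh : -(z + 1 / 2) < 0 := by linarith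
  have i3 := integrableOn_exp_mul_Ioi hzh 0
  have v3 := integral_exp_mul_Ioi hzh 0
  have key : ∀ t ∈ Set.Ioi (0:ℝ), t⁻¹ • (Real.exp (-(z * t)) - Real.exp (-((z + 1) * t)))
      = 2 * (Real.exp (-z * t) * (1 / (2 * t) - 1 / (4 * Real.sinh (t / 2)))
        - Real.exp (-(z + 1) * t) * (1 / (2 * t) - 1 / (4 * Real.sinh (t / 2))))
        + Real.exp (-(z + 1 / 2) * t) := by
    intro t ht
    have ht' : 0 < t := ht
    have hs : 0 < Real.sinh (t / 2) := Real.sinh_pos_iff.2 (by positivity)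
    have e1 : Real.exp (-(z * t)) = Real.exp (-(z + 1 / 2) * t) * Real.exp (t / 2) := by
      rw [← Real.exp_add]; ring_nf
    have e2 : Real.exp (-((z + 1) * t)) = Real.exp (-(z + 1 / 2) * t) * Real.exp (-(t / 2)) := by
      rw [← Real.exp_add]; ring_nf
    rw [show -z * t = -(z * t) by ring, show -(z + 1) * t = -((z + 1) * t) by ring, e1, e2, smul_eq_mul]
    have h3 := Real.sinh_eq (t / 2)
    generalize Real.sinh (t / 2) = S at *
    generalize Real.exp (t / 2) = A at *
    generalize Real.exp (-(t / 2)) = B at *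
    generalize Real.exp (-(z + 1 / 2) * t) = C at *
    obtain rfl : A = 2 * S + B := by linarith
    field_simp
    ring
  have i4 : IntegrableOn (fun t : ℝ => t⁻¹ • (Real.exp (-(z * t)) - Real.exp (-((z + 1) * t)))) (Set.Ioi 0) :=
    IntegrableOn.congr_fun (((i1.sub i2).const_mul 2).add i3) (fun t ht => (key t ht).symm) measurableSet_Ioi
  have hfr := Frullani.integral_Ioi_eq (f := fun t : ℝ => Real.exp (-t)) (L := 1) (R := 0) (a := z) (b := z + 1)
    ((Continuous.locallyIntegrable (by fun_prop)).locallyIntegrableOn _) hz hz1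
    (by
      have : Continuous (fun t : ℝ => Real.exp (-t)) := by fun_prop
      have := this.tendsto 0
      simp only [neg_zero, Real.exp_zero] at this
      exact this.mono_left nhdsWithin_le_nhds)
    (Real.tendsto_exp_neg_atTop_nhds_zero) i4
  rw [setIntegral_congr_fun measurableSet_Ioi key] at hfr
  have h12 : Integrable (fun t : ℝ => 2 * (Real.exp (-z * t) * (1 / (2 * t) - 1 / (4 * Real.sinh (t / 2)))
        - Real.exp (-(z + 1) * t) * (1 / (2 * t) - 1 / (4 * Real.sinh (t / 2))))) (volume.restrict (Set.Ioi 0)) :=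
    (i1.sub i2).const_mul 2
  rw [integral_add h12 i3, integral_const_mul, integral_sub i1 i2, v3, Real.log_div hz1.ne' hz.ne'] at hfr
  simp only [mul_zero, Real.exp_zero, smul_eq_mul, sub_zero, mul_one, neg_div_neg_eq] at hfr
  have : (1:ℝ) / (2 * (z + 1 / 2)) = (1 / (z + 1 / 2)) / 2 := by field_simp
  rw [this]
  linarith

lemma aux_R_lim {z : ℝ} (hz : 0 < z) :
    Tendsto (fun n : ℕ => (z + ((n:ℝ) + 1)) * Real.log (z + ((n:ℝ) + 1)) - (z + ((n:ℝ) + 1))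
      + (1 / 2) * Real.log (2 * π) - Real.log (Real.Gamma (z + ((n:ℝ) + 1) + 1 / 2))) atTop (nhds 0) := by
  have hs : 0 < z + 1 / 2 := by linarith
  have t1 := Real.BohrMollerup.tendsto_log_gamma hs
  have t2 : Tendsto (fun n => Real.log (Stirling.stirlingSeq n)) atTop (nhds (Real.log (√π))) :=
    (Real.continuousAt_log (by positivity)).tendsto.comp Stirling.tendsto_stirlingSeq_sqrt_pi
  have t3 : Tendsto (fun n : ℕ => (n:ℝ) * Real.log (1 + (z + 1) / n)) atTop (nhds (z + 1)) := by
    have := (Real.tendsto_mul_log_one_add_div_atTop (z + 1)).comp (tendsto_natCast_atTop_atTop (R := ℝ))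
    exact this
  have t4 : Tendsto (fun n : ℕ => Real.log (1 + (z + 1) / (n:ℝ))) atTop (nhds 0) := by
    have h1 : Tendsto (fun n : ℕ => 1 + (z + 1) / (n:ℝ)) atTop (nhds (1 + 0)) :=
      tendsto_const_nhds.add (tendsto_const_div_atTop_nhds_zero_nat _)
    rw [add_zero] at h1
    have := (Real.continuousAt_log one_ne_zero).tendsto.comp h1
    rw [Real.log_one] at this
    exact this
  have t := ((((t3.add (t4.const_mul (z + 1))).sub_const (z + 1)).sub
    (t2.sub_const (Real.log √π)))).add (t1.sub_const (Real.log (Real.Gamma (z + 1 / 2))))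
  have e0 : z + 1 + (z + 1) * 0 - (z + 1) - (Real.log √π - Real.log √π)
    + (Real.log (Real.Gamma (z + 1 / 2)) - Real.log (Real.Gamma (z + 1 / 2))) = 0 := by ring
  rw [e0] at t
  refine t.congr' ?_
  filter_upwards [eventually_gt_atTop 0] with n hn
  have hn' : (0:ℝ) < n := by exact_mod_cast hn
  have hfe : ∀ {y : ℝ}, 0 < y → (fun x => Real.log (Real.Gamma x)) (y + 1)
      = (fun x => Real.log (Real.Gamma x)) y + Real.log y := by
    intro y hy
    simp only
    rw [Real.Gamma_add_one hy.ne', Real.log_mul hy.ne' (Real.Gamma_pos_of_pos hy).ne', add_comm]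
  have g1 := Real.BohrMollerup.f_add_nat_eq (f := fun x => Real.log (Real.Gamma x)) hfe hs (n + 1)
  simp only [Nat.cast_add, Nat.cast_one] at g1
  rw [show z + ((n:ℝ) + 1) + 1 / 2 = z + 1 / 2 + ((n:ℝ) + 1) by ring, g1, Real.BohrMollerup.logGammaSeq,
    Stirling.log_stirlingSeq_formula, Real.log_sqrt pi_pos.le, Real.log_mul two_ne_zero hn'.ne',
    Real.log_div hn'.ne' (Real.exp_pos 1).ne', Real.log_exp, Real.log_mul two_ne_zero pi_pos.ne',
    show z + ((n:ℝ) + 1) = n * (1 + (z + 1) / n) by field_simp; ring,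
    Real.log_mul hn'.ne' (by positivity)]
  have : (n:ℝ) * (1 + (z + 1) / n) = n + (z + 1) := by field_simp
  rw [this]
  ring

lemma aux_J_lim {z : ℝ} (hz : 0 < z) :
    Tendsto (fun n : ℕ => ∫ x in Set.Ioi (0:ℝ), Real.arctan (x / (z + ((n:ℝ) + 1))) / (Real.exp (2 * π * x) + 1))
      atTop (nhds 0) := by
  have hC := aux_x_exp (a := 2 * π) (by positivity)
  refine squeeze_zero_norm (a := fun n : ℕ => 1 / (2 * π) ^ 2 * (1 / ((n:ℝ) + 1))) (fun n => ?_) ?_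
  · have hp : 0 < z + ((n:ℝ) + 1) := by positivity
    calc _ ≤ ∫ x in Set.Ioi (0:ℝ), (1 / (z + ((n:ℝ) + 1))) * (x * Real.exp (-(2 * π) * x)) :=
          norm_integral_le_of_norm_le (hC.1.const_mul _)
            ((ae_restrict_iff' measurableSet_Ioi).2 (ae_of_all _ (fun x hx => aux_F_bound hp hx)))
      _ = 1 / (2 * π) ^ 2 * (1 / (z + ((n:ℝ) + 1))) := by rw [integral_const_mul, hC.2, mul_comm]
      _ ≤ _ := by
          refine mul_le_mul_of_nonneg_left ?_ (by positivity)
          exact one_div_le_one_div_of_le (by positivity) (by linarith)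
  · have := (tendsto_one_div_add_atTop_nhds_zero_nat (𝕜 := ℝ)).const_mul (1 / (2 * π) ^ 2)
    rwa [mul_zero] at this

lemma aux_const : ∃ c : ℝ, ∀ z ∈ Set.Ioi (0:ℝ),
    2 * (∫ x in Set.Ioi (0:ℝ), Real.arctan (x / z) / (Real.exp (2 * π * x) + 1))
    - 2 * (∫ x in Set.Ioi (0:ℝ), Real.arctan (x / (z + 1)) / (Real.exp (2 * π * x) + 1))
    - (z * Real.log z - (z + 1) * Real.log (z + 1) + Real.log (z + 1 / 2)) = c := by
  have hd : ∀ z ∈ Set.Ioi (0:ℝ), HasDerivAt (fun z : ℝ =>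
      2 * (∫ x in Set.Ioi (0:ℝ), Real.arctan (x / z) / (Real.exp (2 * π * x) + 1))
    - 2 * (∫ x in Set.Ioi (0:ℝ), Real.arctan (x / (z + 1)) / (Real.exp (2 * π * x) + 1))
    - (z * Real.log z - (z + 1) * Real.log (z + 1) + Real.log (z + 1 / 2))) 0 z := by
    intro z hz
    have hz' : 0 < z := hz
    have hz1 : 0 < z + 1 := by linarith
    have hzh : 0 < z + 1 / 2 := by linarith
    have d1 := (aux_J_deriv hz').const_mul 2
    have d2 := ((aux_J_deriv hz1).comp_add_const z 1).const_mul 2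
    have d3 := Real.hasDerivAt_mul_log hz'.ne'
    have d4 := (Real.hasDerivAt_mul_log hz1.ne').comp_add_const z 1
    have d5 := (Real.hasDerivAt_log hzh.ne').comp_add_const z (1 / 2)
    refine ((d1.sub d2).sub ((d3.sub d4).add d5)).congr_deriv ?_
    rw [(aux_fubini hz').2, (aux_fubini hz1).2]
    have h := aux_diff hz'
    have h5 : (1:ℝ) / (2 * (z + 1 / 2)) = (z + 1 / 2)⁻¹ / 2 := by field_simp
    rw [h5] at h
    linarith
  exact isOpen_Ioi.exists_is_const_of_deriv_eq_zero isPreconnected_Ioi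
    (fun z hz => (hd z hz).differentiableAt.differentiableWithinAt) (fun z hz => (hd z hz).deriv)

lemma aux_final (D : ℝ → ℝ) (c : ℝ) (hD : ∀ z, 0 < z → D z - D (z + 1) = c)
    (hl : ∀ z, 0 < z → Tendsto (fun n : ℕ => D (z + ((n:ℝ) + 1))) atTop (nhds 0)) (z : ℝ) (hz : 0 < z) :
    D z = 0 := by
  have hc : c = 0 := by
    have h1 := hl z hz
    have h2 := hl (z + 1) (by linarith)
    have h3 := h1.sub h2
    rw [sub_zero] at h3
    refine tendsto_nhds_unique (tendsto_const_nhds.congr (fun n => ?_)) h3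
    rw [← hD (z + ((n:ℝ) + 1)) (by positivity)]
    ring_nf
  have h4 : ∀ n : ℕ, D (z + (n:ℝ)) = D z := by
    intro n
    induction n with
    | zero => simp
    | succ n ih =>
      have := hD (z + n) (by positivity)
      push_cast
      rw [← add_assoc]
      linarith
  refine tendsto_nhds_unique (tendsto_const_nhds.congr (fun n => ?_)) (hl z hz)
  rw [← h4 (n + 1)]
  push_cast
  rfl

/-- 2 ∫₀^∞ arctan(x/z)/(e^{2πx}+1) dx = z log z − z + (1/2) log(2π) − log Γ(z+1/2), z > 0. -/
theorem integral_arctan_div_exp_add_one (z : ℝ) (hz : 0 < z) :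
    2 * (∫ x in Set.Ioi (0 : ℝ), Real.arctan (x / z) / (Real.exp (2 * π * x) + 1)) =
      z * Real.log z - z + (1 / 2) * Real.log (2 * π)
        - Real.log (Real.Gamma (z + 1 / 2)) := by
  obtain ⟨c, hc⟩ := aux_const
  have := aux_final (fun z => 2 * (∫ x in Set.Ioi (0 : ℝ), Real.arctan (x / z) / (Real.exp (2 * π * x) + 1)) -
      (z * Real.log z - z + (1 / 2) * Real.log (2 * π)
        - Real.log (Real.Gamma (z + 1 / 2)))) (c - 1) ?_ ?_ z hz
  · linarith
  · intro z hz
    have h := hc z hz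
    have hh : 0 < z + 1 / 2 := by linarith
    rw [show z + 1 + 1 / 2 = (z + 1 / 2) + 1 by ring, Real.Gamma_add_one hh.ne',
      Real.log_mul hh.ne' (Real.Gamma_pos_of_pos hh).ne']
    linarith
  · intro z hz
    simpa using ((aux_J_lim hz).const_mul 2).sub (aux_R_lim hz)
end

section
/- The integral 4 ∫₀^∞ arctan(x)/(e^{2πx} + 1) dx equals −2 + 3·log 2. -/
open Real MeasureTheory Filter

lemma aux_exp_int (c : ℝ) (hc : 0 < c) : IntegrableOn (fun t : ℝ => exp (-(c * t))) (Set.Ioi 0) := by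
  have := integrableOn_exp_mul_Ioi (a := -c) (by linarith) 0
  simpa using this

lemma aux_exp_val (c : ℝ) (hc : 0 < c) : ∫ t in Set.Ioi (0:ℝ), exp (-(c * t)) = 1 / c := by
  have := integral_exp_mul_Ioi (a := -c) (by linarith) 0
  simpa using this

lemma frul_int (a b : ℝ) (ha : 0 < a) (hab : a ≤ b) :
    IntegrableOn (fun t : ℝ => t⁻¹ * (exp (-(a * t)) - exp (-(b * t)))) (Set.Ioi 0) := by
  refine Integrable.mono' ((aux_exp_int a ha).const_mul (b - a)) (by fun_prop) ?_
  filter_upwards [ae_restrict_mem measurableSet_Ioi] with t ht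
  have ht : 0 < t := ht
  have h1 : exp (-(b * t)) = exp (-(a * t)) * exp (-((b - a) * t)) := by
    rw [← exp_add]; congr 1; ring
  have h2 := add_one_le_exp (-((b - a) * t))
  have h3 : exp (-((b - a) * t)) ≤ 1 := exp_le_one_iff.2 (by nlinarith)
  rw [h1, norm_eq_abs, abs_of_nonneg]
  · rw [inv_mul_le_iff₀ ht]
    nlinarith [exp_pos (-(a * t))]
  · have := exp_pos (-(a * t))
    have h4 : 0 ≤ exp (-(a * t)) - exp (-(a * t)) * exp (-((b - a) * t)) := by nlinarith
    positivity

lemma frul_val (a b : ℝ) (ha : 0 < a) (hab : a ≤ b) :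
    ∫ t in Set.Ioi (0:ℝ), t⁻¹ * (exp (-(a * t)) - exp (-(b * t))) = log b - log a := by
  have hb : 0 < b := by linarith
  have hc : Continuous (fun t : ℝ => exp (-t)) := by fun_prop
  have := Frullani.integral_Ioi_eq (f := fun t : ℝ => exp (-t)) (L := 1) (R := 0)
    (hc.locallyIntegrable.locallyIntegrableOn _) ha hb
    (by simpa using (hc.tendsto 0).mono_left nhdsWithin_le_nhds)
    (tendsto_exp_neg_atTop_nhds_zero) (frul_int a b ha hab)
  simpa [log_div hb.ne' ha.ne'] using this

lemma gint (m : ℝ) (hm : 0 < m) :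
    IntegrableOn (fun t : ℝ => exp (-(m * t)) * ((1 - exp (-t)) / t ^ 2 + (m - (m + 1) * exp (-t)) / t))
      (Set.Ioi 0) ∧
    ∫ t in Set.Ioi (0:ℝ), exp (-(m * t)) * ((1 - exp (-t)) / t ^ 2 + (m - (m + 1) * exp (-t)) / t) = 1 := by
  set g : ℝ → ℝ := fun t => exp (-(m * t)) * dslope (fun t => exp (-t)) 0 t with hg
  have hd : HasDerivAt (fun t : ℝ => exp (-t)) (-1) 0 := by
    simpa using (hasDerivAt_neg (0:ℝ)).exp
  have hc : ContinuousWithinAt g (Set.Ici 0) 0 := by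
    apply ContinuousAt.continuousWithinAt
    apply ContinuousAt.mul (by fun_prop)
    exact continuousAt_dslope_same.2 hd.differentiableAt
  have hgt : ∀ t : ℝ, t ≠ 0 → g t = exp (-(m * t)) * ((exp (-t) - 1) / t) := by
    intro t ht
    simp only [hg]
    rw [dslope_of_ne _ ht, slope_def_field]; simp
  have hder : ∀ t ∈ Set.Ioi (0:ℝ), HasDerivAt g
      (exp (-(m * t)) * ((1 - exp (-t)) / t ^ 2 + (m - (m + 1) * exp (-t)) / t)) t := by
    intro t ht
    have ht : 0 < t := ht
    have h1 : HasDerivAt (fun t : ℝ => exp (-(m * t)) * ((exp (-t) - 1) / t))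
      (exp (-(m * t)) * ((1 - exp (-t)) / t ^ 2 + (m - (m + 1) * exp (-t)) / t)) t := by
      have e1 : HasDerivAt (fun t : ℝ => exp (-(m * t))) (exp (-(m * t)) * (-(m * 1))) t :=
        (((hasDerivAt_id t).const_mul m).neg).exp
      have e2 : HasDerivAt (fun t : ℝ => exp (-t)) (exp (-t) * (-1)) t := (hasDerivAt_neg t).exp
      have e3 := e1.mul ((e2.sub_const 1).div (hasDerivAt_id t) ht.ne')
      refine e3.congr_deriv ?_
      simp only [id]
      simp only [Pi.div_apply]
      simp only [id]
      field_simp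
      ring
    refine h1.congr_of_eventuallyEq ?_
    filter_upwards [eventually_ne_nhds ht.ne'] with s hs using hgt s hs
  have hpos : ∀ t ∈ Set.Ioi (0:ℝ), 0 ≤
      (exp (-(m * t)) * ((1 - exp (-t)) / t ^ 2 + (m - (m + 1) * exp (-t)) / t)) := by
    intro t ht
    have ht : 0 < t := ht
    have h1 := add_one_le_exp t
    have h2 : exp t * exp (-t) = 1 := by rw [← exp_add]; simp
    have h3 := exp_pos (-t)
    have h4 : (t + 1) * exp (-t) ≤ 1 := by nlinarith
    have h5 : exp (-t) ≤ 1 := by nlinarith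
    have : (1 - exp (-t)) / t ^ 2 + (m - (m + 1) * exp (-t)) / t
      = ((1 - (t + 1) * exp (-t)) + m * t * (1 - exp (-t))) / t ^ 2 := by field_simp; ring
    rw [this]
    have h6 : 0 ≤ m * t * (1 - exp (-t)) := by
      apply mul_nonneg (by positivity); linarith
    have h7 : 0 ≤ 1 - (t + 1) * exp (-t) := by linarith
    positivity
  have hlim : Tendsto g atTop (nhds 0) := by
    have h1 : Tendsto (fun t : ℝ => exp (-(m * t)) * ((exp (-t) - 1) * t⁻¹)) atTop (nhds (0 * ((0 - 1) * 0))) := by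
      refine Tendsto.mul ?_ (Tendsto.mul (tendsto_exp_neg_atTop_nhds_zero.sub_const 1) tendsto_inv_atTop_zero)
      exact tendsto_exp_neg_atTop_nhds_zero.comp (tendsto_id.const_mul_atTop hm)
    rw [zero_mul] at h1
    refine h1.congr' ?_
    filter_upwards [eventually_ne_atTop 0] with t ht
    rw [hgt t ht, div_eq_mul_inv]
  refine ⟨integrableOn_Ioi_deriv_of_nonneg hc hder hpos hlim, ?_⟩
  rw [integral_Ioi_of_hasDerivAt_of_nonneg hc hder hpos hlim]
  simp [hg, dslope_same, hd.deriv]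

lemma bterm (m : ℝ) (hm : 0 < m) :
    IntegrableOn (fun t : ℝ => exp (-(m * t)) * ((1 - exp (-t)) / t ^ 2 - exp (-(t / 2)) / t))
      (Set.Ioi 0) ∧
    ∫ t in Set.Ioi (0:ℝ), exp (-(m * t)) * ((1 - exp (-t)) / t ^ 2 - exp (-(t / 2)) / t)
     = m * log m - (m + 1) * log (m + 1) + log (m + 1 / 2) + 1 := by
  obtain ⟨h1, h2⟩ := gint m hm
  have h3 := (frul_int m (m + 1 / 2) hm (by linarith)).const_mul m
  have h4 := (frul_int (m + 1 / 2) (m + 1) (by linarith) (by linarith)).const_mul (m + 1)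
  have key : Set.EqOn (fun t : ℝ => exp (-(m * t)) * ((1 - exp (-t)) / t ^ 2 - exp (-(t / 2)) / t))
     (fun t : ℝ => (exp (-(m * t)) * ((1 - exp (-t)) / t ^ 2 + (m - (m + 1) * exp (-t)) / t)
       - m * (t⁻¹ * (exp (-(m * t)) - exp (-((m + 1 / 2) * t)))))
       - (m + 1) * (t⁻¹ * (exp (-((m + 1 / 2) * t)) - exp (-((m + 1) * t))))) (Set.Ioi 0) := by
    intro t ht
    have ht : 0 < t := ht
    have e1 : exp (-((m + 1 / 2) * t)) = exp (-(m * t)) * exp (-(t / 2)) := by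
      rw [← exp_add]; congr 1; ring
    have e2 : exp (-((m + 1) * t)) = exp (-(m * t)) * exp (-t) := by
      rw [← exp_add]; congr 1; ring
    simp only [e1, e2]
    field_simp
    ring
  constructor
  · rw [integrableOn_congr_fun key measurableSet_Ioi]
    exact (h1.sub h3).sub h4
  · rw [setIntegral_congr_fun measurableSet_Ioi key, integral_sub ?_ h4, integral_sub h1 h3, h2,
      integral_const_mul, integral_const_mul, frul_val _ _ hm (by linarith),
      frul_val _ _ (by linarith) (by linarith)]
    · ring
    · exact h1.sub h3

lemma bpos (m t : ℝ) (ht : 0 < t) :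
    0 ≤ exp (-(m * t)) * ((1 - exp (-t)) / t ^ 2 - exp (-(t / 2)) / t) := by
  apply mul_nonneg (exp_pos _).le
  have h1 : t / 2 ≤ sinh (t / 2) := self_le_sinh_iff.2 (by positivity)
  rw [sinh_eq] at h1
  have e1 : exp (t / 2) * exp (-(t / 2)) = 1 := by rw [← exp_add]; simp
  have e2 : exp (-t) = exp (-(t / 2)) * exp (-(t / 2)) := by rw [← exp_add]; congr 1; ring
  have h3 := exp_pos (-(t / 2))
  have : (1 - exp (-t)) / t ^ 2 - exp (-(t / 2)) / t = (1 - exp (-t) - t * exp (-(t / 2))) / t ^ 2 := by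
    field_simp
  rw [this]
  apply div_nonneg _ (by positivity)
  rw [e2]
  nlinarith

lemma csum : Tendsto (fun N : ℕ => ∑ n ∈ Finset.range N,
    (((n:ℝ) + 1) * log ((n:ℝ) + 1) - ((n:ℝ) + 1 + 1) * log ((n:ℝ) + 1 + 1) + log ((n:ℝ) + 1 + 1 / 2) + 1))
    atTop (nhds (-1 + 3 / 2 * log 2)) := by
  have hf : ∀ N : ℕ, ∑ n ∈ Finset.range N,
    (((n:ℝ) + 1) * log ((n:ℝ) + 1) - ((n:ℝ) + 1 + 1) * log ((n:ℝ) + 1 + 1) + log ((n:ℝ) + 1 + 1 / 2) + 1)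
     = log (Stirling.stirlingSeq (2 * (N + 1))) - log (Stirling.stirlingSeq (N + 1)) + (-1 + 3 / 2 * log 2) := by
    intro N
    have gen : ∀ N : ℕ, ∑ n ∈ Finset.range N,
      (((n:ℝ) + 1) * log ((n:ℝ) + 1) - ((n:ℝ) + 1 + 1) * log ((n:ℝ) + 1 + 1) + log ((n:ℝ) + 1 + 1 / 2) + 1)
       = N - (N + 1) * log (N + 1) + log ((2 * (N + 1)).factorial) - log ((N + 1).factorial)
        - 2 * (N + 1) * log 2 + log 2 := by
      intro N
      induction N with
      | zero => simp; ring
      | succ N ih =>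
        rw [Finset.sum_range_succ, ih]
        have f1 : (2 * (N + 1 + 1)).factorial = (2 * (N + 1) + 2) * ((2 * (N + 1) + 1) * (2 * (N + 1)).factorial) := by
          rw [show 2 * (N + 1 + 1) = 2 * (N + 1) + 1 + 1 by ring, Nat.factorial_succ, Nat.factorial_succ]
        have f2 : (N + 1 + 1).factorial = (N + 1 + 1) * (N + 1).factorial := Nat.factorial_succ _
        rw [f1, f2]
        have g1 : ((2 * (N + 1)).factorial : ℝ) ≠ 0 := by positivity
        have g2 : ((N + 1).factorial : ℝ) ≠ 0 := by positivity
        push_cast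
        rw [log_mul (by positivity) (by positivity), log_mul (by positivity) g1, log_mul (by positivity) g2,
          show (2 * ((N:ℝ) + 1) + 2) = 2 * (N + 1 + 1) by ring, log_mul (by positivity) (by positivity),
          show (2 * ((N:ℝ) + 1) + 1) = 2 * (N + 1 + 1 / 2) by ring, log_mul (by positivity) (by positivity)]
        ring
    rw [gen, Stirling.log_stirlingSeq_formula, Stirling.log_stirlingSeq_formula]
    push_cast
    have hN : (0:ℝ) < N + 1 := by positivity
    rw [log_div (by positivity) (by positivity), log_div (by positivity) (by positivity), log_exp,
      log_mul (by norm_num) (by positivity), log_mul (by norm_num) (by positivity)]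
    ring
  simp_rw [hf]
  have hs := Stirling.tendsto_stirlingSeq_sqrt_pi
  have hl : Tendsto (fun n => log (Stirling.stirlingSeq n)) atTop (nhds (log √π)) :=
    hs.log (by positivity)
  have h1 := hl.comp (tendsto_add_atTop_nat 1)
  have h2 : Tendsto (fun N : ℕ => 2 * (N + 1)) atTop atTop :=
    tendsto_atTop_mono (fun n => by simp only [id]; omega) tendsto_id
  have h3 := ((hl.comp h2).sub h1).add_const (-1 + 3 / 2 * log 2)
  simpa using h3

lemma second_half :
    ∫ t in Set.Ioi (0:ℝ), exp (-t) * (1 / t ^ 2 - 1 / (2 * t * sinh (t / 2))) = -1 + 3 / 2 * log 2 := by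
  have hi := fun n : ℕ => bterm ((n:ℝ) + 1) (by positivity)
  have hn : ∀ n : ℕ, ∫ t in Set.Ioi (0:ℝ), ‖exp (-(((n:ℝ) + 1) * t)) * ((1 - exp (-t)) / t ^ 2 - exp (-(t / 2)) / t)‖
      = ((n:ℝ) + 1) * log ((n:ℝ) + 1) - ((n:ℝ) + 1 + 1) * log ((n:ℝ) + 1 + 1) + log ((n:ℝ) + 1 + 1 / 2) + 1 := by
    intro n
    rw [← (hi n).2]
    refine setIntegral_congr_fun measurableSet_Ioi ?_
    intro t ht
    exact norm_of_nonneg (bpos _ t ht)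
  have hnn : ∀ n : ℕ, 0 ≤ ((n:ℝ) + 1) * log ((n:ℝ) + 1) - ((n:ℝ) + 1 + 1) * log ((n:ℝ) + 1 + 1) + log ((n:ℝ) + 1 + 1 / 2) + 1 := by
    intro n
    rw [← hn n]
    exact integral_nonneg (fun _ => norm_nonneg _)
  have hs := (hasSum_iff_tendsto_nat_of_nonneg hnn _).2 csum
  have h := hasSum_integral_of_summable_integral_norm (fun n => (hi n).1) (by simp_rw [hn]; exact hs.summable)
  simp_rw [(hi _).2] at h
  rw [← h.unique hs]
  refine setIntegral_congr_fun measurableSet_Ioi ?_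
  intro t ht
  have ht : 0 < t := ht
  have e0 : exp (-t) < 1 := by simpa using ht
  have hg := (hasSum_geometric_of_lt_one (exp_pos (-t)).le e0).mul_left (exp (-t))
  have hg2 := hg.mul_right ((1 - exp (-t)) / t ^ 2 - exp (-(t / 2)) / t)
  have : ∀ n : ℕ, exp (-(((n:ℝ) + 1) * t)) = exp (-t) * exp (-t) ^ n := by
    intro n; rw [← exp_nat_mul, ← exp_add]; congr 1; ring
  simp only [this]
  rw [hg2.tsum_eq, sinh_eq]
  have e2 : exp (-t) = exp (-(t / 2)) * exp (-(t / 2)) := by rw [← exp_add]; congr 1; ring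
  have e3 : exp (t / 2) = (exp (-(t / 2)))⁻¹ := by rw [exp_neg, inv_inv]
  rw [e3]
  have h3 := exp_pos (-(t / 2))
  rw [e2] at e0 ⊢
  set u := exp (-(t / 2))
  have h4 : 1 - u * u ≠ 0 := by linarith
  have h5 : u⁻¹ - u ≠ 0 := by
    intro h; apply h4; field_simp at h; linarith
  have h6 : u⁻¹ - u = (1 - u * u) / u := by field_simp
  rw [h6]
  have h7 : 1 - u ^ 2 ≠ 0 := by rw [pow_two]; exact h4
  field_simp

lemma aux_exp_lim (c : ℝ) (hc : 0 < c) : Tendsto (fun t : ℝ => exp (-(c * t))) atTop (nhds 0) :=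
  tendsto_exp_neg_atTop_nhds_zero.comp (tendsto_id.const_mul_atTop hc)

lemma aux_exp_der (c t : ℝ) : HasDerivAt (fun t : ℝ => exp (-(c * t))) (exp (-(c * t)) * (-(c * 1))) t :=
  (((hasDerivAt_id t).const_mul c).neg).exp

lemma exp_bdd_int (c : ℝ) (hc : 0 < c) (C : ℝ) (f : ℝ → ℝ) (hf : Measurable f) (hb : ∀ x, |f x| ≤ C) :
    IntegrableOn (fun x : ℝ => exp (-(c * x)) * f x) (Set.Ioi 0) := by
  refine Integrable.mono' ((aux_exp_int c hc).mul_const C) (by fun_prop) ?_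
  refine Eventually.of_forall fun x => ?_
  rw [norm_mul, norm_of_nonneg (exp_pos _).le]
  exact mul_le_mul_of_nonneg_left (hb x) (exp_pos _).le

lemma exp_bdd_lim (c : ℝ) (hc : 0 < c) (C : ℝ) (f : ℝ → ℝ) (hb : ∀ x, |f x| ≤ C) :
    Tendsto (fun x : ℝ => exp (-(c * x)) * f x) atTop (nhds 0) := by
  have h := (aux_exp_lim c hc).mul_const C
  rw [zero_mul] at h
  refine squeeze_zero_norm (fun x => ?_) h
  rw [norm_mul, norm_of_nonneg (exp_pos _).le]
  exact mul_le_mul_of_nonneg_left (hb x) (exp_pos _).le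

lemma cos_int (c : ℝ) (hc : 0 < c) (t : ℝ) :
    ∫ x in Set.Ioi (0:ℝ), exp (-(c * x)) * cos (x * t) = c / (c ^ 2 + t ^ 2) := by
  have hp : c ^ 2 + t ^ 2 ≠ 0 := by positivity
  have hd : ∀ x ∈ Set.Ici (0:ℝ), HasDerivAt
      (fun x : ℝ => exp (-(c * x)) * ((t * sin (x * t) - c * cos (x * t)) / (c ^ 2 + t ^ 2)))
      (exp (-(c * x)) * cos (x * t)) x := by
    intro x _
    have e0 : HasDerivAt (fun x : ℝ => x * t) (1 * t) x := (hasDerivAt_id x).mul_const t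
    have e := (aux_exp_der c x).mul (((e0.sin.const_mul t).sub (e0.cos.const_mul c)).div_const (c ^ 2 + t ^ 2))
    refine e.congr_deriv ?_
    simp only [Pi.sub_apply]
    field_simp
    ring
  rw [integral_Ioi_of_hasDerivAt_of_tendsto' hd
    (exp_bdd_int c hc 1 _ (by fun_prop) (fun x => abs_cos_le_one _))
    (exp_bdd_lim c hc ((|t| + c) / (c ^ 2 + t ^ 2)) _ (fun x => ?_))]
  · simp; ring
  · rw [abs_div, abs_of_pos (show 0 < c ^ 2 + t ^ 2 by positivity)]
    gcongr
    refine (abs_sub _ _).trans ?_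
    rw [abs_mul, abs_mul, abs_of_pos hc]
    have h1 := abs_sin_le_one (x * t)
    have h2 := abs_cos_le_one (x * t)
    nlinarith [abs_nonneg t]

lemma laplace (c : ℝ) (hc : 0 < c) :
    ∫ x in Set.Ioi (0:ℝ), exp (-(c * x)) * (1 / (1 + x ^ 2)) =
      c * ∫ t in Set.Ioi (0:ℝ), exp (-t) * (1 / (t ^ 2 + c ^ 2)) := by
  have h1 : ∀ x : ℝ, exp (-(c * x)) * (1 / (1 + x ^ 2)) =
      ∫ t in Set.Ioi (0:ℝ), exp (-(c * x)) * (exp (-(1 * t)) * cos (t * x)) := by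
    intro x
    rw [integral_const_mul, cos_int 1 one_pos x]; simp
  have h2 : ∀ t : ℝ, c * (exp (-t) * (1 / (t ^ 2 + c ^ 2))) =
      ∫ x in Set.Ioi (0:ℝ), exp (-(c * x)) * (exp (-(1 * t)) * cos (t * x)) := by
    intro t
    have : ∀ x : ℝ, exp (-(c * x)) * (exp (-(1 * t)) * cos (t * x)) =
      exp (-t) * (exp (-(c * x)) * cos (x * t)) := by
      intro x; rw [mul_comm t x, one_mul]; ring
    simp_rw [this]
    rw [integral_const_mul, cos_int c hc t]
    ring
  rw [← integral_const_mul]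
  simp_rw [h1, h2]
  rw [integral_integral_swap]
  have h3 := (aux_exp_int c hc).mul_prod (aux_exp_int 1 one_pos)
  refine Integrable.mono' h3 (by fun_prop) ?_
  refine Eventually.of_forall fun p => ?_
  simp only [Function.uncurry]
  rw [norm_mul, norm_mul, norm_of_nonneg (exp_pos _).le, norm_of_nonneg (exp_pos _).le]
  have := abs_cos_le_one (p.2 * p.1)
  rw [norm_eq_abs]
  gcongr
  exact mul_le_of_le_one_right (exp_pos _).le this

lemma arctan_bd (x : ℝ) : |arctan x| ≤ π / 2 := by
  rw [abs_le]; exact ⟨(neg_pi_div_two_lt_arctan x).le, (arctan_lt_pi_div_two x).le⟩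

lemma rat_bd (x : ℝ) : |1 / (1 + x ^ 2)| ≤ 1 := by
  rw [abs_of_nonneg (by positivity), div_le_one (by positivity)]; nlinarith [sq_nonneg x]

lemma rat_bd' (c x : ℝ) (hc : 0 < c) : |1 / (x ^ 2 + c ^ 2)| ≤ 1 / c ^ 2 := by
  rw [abs_of_nonneg (by positivity)]
  gcongr
  nlinarith [sq_nonneg x]

lemma arctan_laplace (c : ℝ) (hc : 0 < c) :
    ∫ x in Set.Ioi (0:ℝ), exp (-(c * x)) * arctan x =
      ∫ t in Set.Ioi (0:ℝ), exp (-t) * (1 / (t ^ 2 + c ^ 2)) := by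
  have i1 := exp_bdd_int c hc _ _ (by fun_prop) rat_bd
  have i2 := exp_bdd_int c hc _ _ (by fun_prop) arctan_bd
  have hd : ∀ x ∈ Set.Ici (0:ℝ), HasDerivAt (fun x : ℝ => exp (-(c * x)) * arctan x)
      (exp (-(c * x)) * (1 / (1 + x ^ 2)) - c * (exp (-(c * x)) * arctan x)) x := by
    intro x _
    refine ((aux_exp_der c x).mul (hasDerivAt_arctan x)).congr_deriv ?_
    ring
  have h := integral_Ioi_of_hasDerivAt_of_tendsto' hd (i1.sub (i2.const_mul c))
    (exp_bdd_lim c hc _ _ arctan_bd)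
  rw [integral_sub i1 (i2.const_mul c), integral_const_mul, laplace c hc] at h
  simp only [arctan_zero, mul_zero, sub_zero] at h
  have : c * ((∫ t in Set.Ioi (0:ℝ), exp (-t) * (1 / (t ^ 2 + c ^ 2))) -
    ∫ x in Set.Ioi (0:ℝ), exp (-(c * x)) * arctan x) = 0 := by linarith
  rcases mul_eq_zero.1 this with h | h
  · exact absurd h hc.ne'
  · linarith

lemma kern_int (c : ℝ) (hc : 0 < c) :
    IntegrableOn (fun t : ℝ => exp (-t) * (1 / (t ^ 2 + c ^ 2))) (Set.Ioi 0) := by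
  simpa using exp_bdd_int 1 one_pos _ _ (by fun_prop) (fun x => rat_bd' c x hc)

lemma kern_le (c : ℝ) (hc : 0 < c) :
    ∫ t in Set.Ioi (0:ℝ), exp (-t) * (1 / (t ^ 2 + c ^ 2)) ≤ 1 / c ^ 2 := by
  have h := aux_exp_val 1 one_pos
  have hi := aux_exp_int 1 one_pos
  simp only [one_mul, div_one] at h hi
  calc _ ≤ ∫ t in Set.Ioi (0:ℝ), exp (-t) * (1 / c ^ 2) := by
        refine integral_mono (kern_int c hc) (hi.mul_const _) fun t => ?_
        exact mul_le_mul_of_nonneg_left ((le_abs_self _).trans (rat_bd' c t hc)) (exp_pos _).le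
    _ = 1 / c ^ 2 := by rw [integral_mul_const, h, one_mul]

lemma kern_sum : Summable (fun k : ℕ => ∫ t in Set.Ioi (0:ℝ), exp (-t) * (1 / (t ^ 2 + (2 * π * (k + 1)) ^ 2))) := by
  have h : Summable (fun k : ℕ => 1 / (2 * π * ((k:ℝ) + 1)) ^ 2) := by
    have := ((summable_nat_add_iff 1).2 (summable_one_div_nat_pow.2 (one_lt_two))).mul_left (1 / (2 * π) ^ 2)
    refine this.congr fun k => ?_
    push_cast
    field_simp
  refine Summable.of_nonneg_of_le (fun k => ?_) (fun k => kern_le _ (by positivity)) h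
  exact integral_nonneg fun t => by positivity

lemma hasSum_cg {E : Type*} [AddCommMonoid E] [TopologicalSpace E] {f g : ℕ → E} {a b : E}
    (h : HasSum f a) (hf : ∀ k, g k = f k) (hb : b = a) : HasSum g b := by
  rw [hb, show g = f from funext hf]; exact h

lemma coth_sum (y : ℝ) (hy : 0 < y) :
    HasSum (fun n : ℕ => 1 / (y ^ 2 + ((n:ℝ) + 1) ^ 2)) ((π * (cosh (π * y) / sinh (π * y)) - 1 / y) / (2 * y)) := by
  have hz : (y * Complex.I : ℂ) ∈ Complex.integerComplement := by
    rintro ⟨n, hn⟩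
    have := congrArg Complex.im hn
    simp at this
    exact hy.ne this
  have hyc : (y : ℂ) ≠ 0 := by exact_mod_cast hy.ne'
  have hs := (summable_cotTerm hz).hasSum
  have he : ∑' n : ℕ, cotTerm (y * Complex.I : ℂ) n = π * Complex.cot (π * (y * Complex.I)) - 1 / (y * Complex.I) :=
    (cot_series_rep' hz).symm
  rw [he] at hs
  have hs2 := hs.mul_left (Complex.I / (2 * y))
  rw [← Complex.hasSum_ofReal]
  refine (hasSum_cg hs2 ?_ ?_ :)
  · intro n
    rw [cotTerm_identity hz]
    have h1 : ((y:ℂ) * Complex.I + (n + 1)) * (y * Complex.I - (n + 1)) = -(y ^ 2 + (n + 1) ^ 2) := by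
      linear_combination (y:ℂ) ^ 2 * Complex.I_sq
    rw [h1]
    have h2 : ((y:ℂ) ^ 2 + (n + 1) ^ 2) ≠ 0 := by
      have : (y ^ 2 + ((n:ℝ) + 1) ^ 2) ≠ 0 := by positivity
      exact_mod_cast this
    push_cast
    field_simp
    linear_combination Complex.I_sq
  · have h3 : (π : ℂ) * (y * Complex.I) = (π * y : ℂ) * Complex.I := by ring
    rw [h3, Complex.cot_eq_cos_div_sin, Complex.cos_mul_I, Complex.sin_mul_I]
    have h4 : Complex.sinh (π * y) ≠ 0 := by
      have : sinh (π * y) ≠ 0 := by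
        rw [Ne, sinh_eq_zero]; positivity
      exact_mod_cast this
    push_cast
    have h5 := Complex.I_ne_zero
    field_simp

lemma alt_sum (t : ℝ) (ht : 0 < t) :
    HasSum (fun k : ℕ => (-1:ℝ) ^ k * (1 / (t ^ 2 + (2 * π * ((k:ℝ) + 1)) ^ 2)))
      ((1 / t ^ 2 - 1 / (2 * t * sinh (t / 2))) / 2) := by
  have hpi := pi_pos
  set f : ℕ → ℝ := fun k => 1 / (t ^ 2 + (2 * π * ((k:ℝ) + 1)) ^ 2) with hf
  have hA := hasSum_cg (g := f) ((coth_sum (t / (2 * π)) (by positivity)).mul_left (1 / (2 * π) ^ 2))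
    (fun k => by simp only [hf]; field_simp) rfl
  have hB := hasSum_cg (g := fun k => f (2 * k + 1))
    ((coth_sum (t / (4 * π)) (by positivity)).mul_left (1 / (4 * π) ^ 2))
    (fun k => by simp only [hf]; push_cast; field_simp; ring) rfl
  have hE : Summable (fun k => f (2 * k)) := hA.summable.comp_injective (fun a b h => by simpa using h)
  have h1 := (hE.hasSum.even_add_odd hB).unique hA
  have h2 := HasSum.even_add_odd
    (f := fun k => (-1:ℝ) ^ k * f k) (hasSum_cg hE.hasSum (fun k => by simp) rfl)
    (hasSum_cg hB.neg (fun k => by simp [pow_succ]) rfl)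
  convert h2 using 1
  rw [eq_sub_of_add_eq h1]
  have e1 : π * (t / (2 * π)) = 2 * (t / 4) := by field_simp; ring
  have e2 : π * (t / (4 * π)) = t / 4 := by field_simp
  have e3 : t / 2 = 2 * (t / 4) := by ring
  rw [e1, e2, e3, sinh_two_mul, cosh_two_mul]
  have hs : 0 < sinh (t / 4) := sinh_pos_iff.2 (by positivity)
  have hc := cosh_pos (t / 4)
  have hcs := cosh_sq (t / 4)
  field_simp
  rw [hcs]
  linear_combination (8 * t) * hcs

lemma first_half :
    ∫ x in Set.Ioi (0 : ℝ), arctan x / (exp (2 * π * x) + 1) =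
    ∫ t in Set.Ioi (0:ℝ), exp (-t) * ((1 / t ^ 2 - 1 / (2 * t * sinh (t / 2))) / 2) := by
  have hpi := pi_pos
  have hc : ∀ k : ℕ, 0 < 2 * π * ((k:ℝ) + 1) := fun k => by positivity
  have hL := hasSum_integral_of_summable_integral_norm (μ := volume.restrict (Set.Ioi (0:ℝ)))
    (F := fun (k : ℕ) (x : ℝ) => (-1:ℝ) ^ k * (exp (-((2 * π * ((k:ℝ) + 1)) * x)) * arctan x))
    (fun k => (exp_bdd_int _ (hc k) _ _ (by fun_prop) arctan_bd).const_mul _)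
    (by
      refine kern_sum.congr fun k => ?_
      rw [← arctan_laplace _ (hc k)]
      refine setIntegral_congr_fun measurableSet_Ioi fun x hx => ?_
      have : 0 ≤ arctan x := arctan_nonneg.2 (le_of_lt hx)
      simp only [norm_mul, norm_pow, norm_neg, norm_one, one_pow, one_mul]
      rw [norm_of_nonneg (exp_pos _).le, norm_of_nonneg this])
  have hR := hasSum_integral_of_summable_integral_norm (μ := volume.restrict (Set.Ioi (0:ℝ)))
    (F := fun (k : ℕ) (t : ℝ) => (-1:ℝ) ^ k * (exp (-t) * (1 / (t ^ 2 + (2 * π * ((k:ℝ) + 1)) ^ 2))))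
    (fun k => (kern_int _ (hc k)).const_mul _)
    (by
      refine kern_sum.congr fun k => ?_
      refine setIntegral_congr_fun measurableSet_Ioi fun x hx => ?_
      simp only [norm_mul, norm_pow, norm_neg, norm_one, one_pow, one_mul]
      rw [norm_of_nonneg (exp_pos _).le, norm_of_nonneg (by positivity)])
  simp_rw [integral_const_mul] at hL hR
  simp_rw [arctan_laplace _ (hc _)] at hL
  have h := hL.unique hR
  convert h using 1
  · refine setIntegral_congr_fun measurableSet_Ioi fun x hx => ?_
    have hx : 0 < x := hx
    set u := exp (-(2 * π * x)) with hu
    have hu0 : 0 < u := exp_pos _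
    have hu1 : u < 1 := by rw [hu, exp_lt_one_iff]; simp; positivity
    have hg := ((hasSum_geometric_of_abs_lt_one (r := -u) (by rw [abs_neg, abs_of_pos hu0]; exact hu1)).mul_left u).mul_right (arctan x)
    have e : ∀ k : ℕ, exp (-((2 * π * ((k:ℝ) + 1)) * x)) = u * u ^ k := by
      intro k; rw [hu, ← exp_nat_mul, ← exp_add]; congr 1; ring
    have e2 : exp (2 * π * x) = u⁻¹ := by rw [hu, exp_neg, inv_inv]
    simp only [e, e2]
    rw [show (fun k : ℕ => (-1:ℝ) ^ k * (u * u ^ k * arctan x)) = fun k : ℕ => u * (-u) ^ k * arctan x from by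
      funext k; rw [neg_pow u]; ring, hg.tsum_eq]
    have hp1 : 1 + u ≠ 0 := by positivity
    rw [sub_neg_eq_add]
    field_simp
    try ring
  · refine setIntegral_congr_fun measurableSet_Ioi fun t ht => ?_
    rw [← ((alt_sum t ht).mul_left (exp (-t))).tsum_eq]
    refine tsum_congr fun k => ?_
    ring

/-- 4 ∫₀^∞ arctan x/(e^{2πx}+1) dx = −2 + 3 log 2. -/
theorem integral_arctan_exp_add_one :
    4 * (∫ x in Set.Ioi (0 : ℝ), Real.arctan x / (Real.exp (2 * π * x) + 1)) =
      -2 + 3 * Real.log 2 := by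
  rw [first_half]
  have h : ∀ t : ℝ, exp (-t) * ((1 / t ^ 2 - 1 / (2 * t * sinh (t / 2))) / 2) =
      (1 / 2) * (exp (-t) * (1 / t ^ 2 - 1 / (2 * t * sinh (t / 2)))) := fun t => by ring
  simp_rw [h]
  rw [integral_const_mul, second_half]
  ring
end

section
/- For every real z > 0, 2 ∫₀^∞ x / ((e^{2πx} + 1)(x² + z²)) dx = ψ(z + 1/2) − log z, where ψ is the digamma function. -/
open Real MeasureTheory Filter

lemma aux_tanh (x : ℝ) (hx : 0 < x) :
    HasSum (fun k : ℕ => 2 * x / (x ^ 2 + ((k : ℝ) + 1 / 2) ^ 2))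
      (π * (1 - 2 / (Real.exp (2 * π * x) + 1))) := by
  rw [hasSum_iff_tendsto_nat_of_nonneg (fun k => by positivity)]
  set s : ℂ := 1 / 2 + x * Complex.I with hs
  have him : s.im = x := by simp [hs]
  have hsZ : s ∈ Complex.integerComplement := by
    rw [Complex.mem_integerComplement_iff]
    rintro ⟨n, hn⟩
    have := congrArg Complex.im hn
    rw [him] at this
    simp at this
    linarith
  have hne : ∀ r : ℂ, r.im = 0 → s + r ≠ 0 := by
    intro r hr h
    have := congrArg Complex.im h
    simp [him, hr] at this
    linarith
  have h1 := tendsto_logDeriv_euler_cot_sub hsZ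
  have h2 : Tendsto (fun n : ℕ => 1 / (s + n)) atTop (nhds 0) := by
    rw [tendsto_zero_iff_norm_tendsto_zero]
    refine squeeze_zero' (Eventually.of_forall fun n => norm_nonneg _)
      (g := fun n : ℕ => 1 / (n : ℝ)) ?_ tendsto_one_div_atTop_nhds_zero_nat
    filter_upwards [eventually_gt_atTop 0] with n hn
    rw [norm_div, norm_one]
    have hn' : (0 : ℝ) < n := by exact_mod_cast hn
    apply one_div_le_one_div_of_le hn'
    have := Complex.abs_re_le_norm (s + n)
    have h3 : (s + n).re = 1 / 2 + n := by simp [hs]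
    rw [h3, abs_of_pos (by positivity)] at this
    linarith
  have key : ∀ n : ℕ, ((∑ k ∈ Finset.range n, 2 * x / (x ^ 2 + ((k : ℝ) + 1 / 2) ^ 2) : ℝ) : ℂ)
      = Complex.I * (1 / s + ∑ j ∈ Finset.range n, cotTerm s j - 1 / (s + n)) := by
    intro n
    induction n with
    | zero => simp
    | succ n ih =>
      rw [Finset.sum_range_succ, Finset.sum_range_succ, Complex.ofReal_add, ih]
      have e : ((2 * x / (x ^ 2 + ((n : ℝ) + 1 / 2) ^ 2) : ℝ) : ℂ)
          = Complex.I * (1 / (s + n) + 1 / (s - (n + 1))) := by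
        have a1 : s + n ≠ 0 := hne _ (by simp)
        have a2 : s - (n + 1) ≠ 0 := by
          rw [sub_eq_add_neg]; exact hne _ (by simp)
        have a4 : (s + n) * (s - (n + 1)) = - ((x : ℂ) ^ 2 + ((n : ℂ) + 1 / 2) ^ 2) := by
          rw [hs]; linear_combination (x : ℂ) ^ 2 * Complex.I_sq
        rw [one_div_add_one_div a1 a2, a4]
        push_cast
        rw [div_neg, mul_neg, ← mul_div_assoc, ← neg_div]
        congr 1
        rw [hs]; linear_combination 2 * (x : ℂ) * Complex.I_sq
      rw [e, cotTerm]
      push_cast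
      ring
  have h3 : Tendsto (fun n : ℕ =>
      ((∑ k ∈ Finset.range n, 2 * x / (x ^ 2 + ((k : ℝ) + 1 / 2) ^ 2) : ℝ) : ℂ)) atTop
      (nhds (((π * (1 - 2 / (Real.exp (2 * π * x) + 1)) : ℝ)) : ℂ)) := by
    simp_rw [key]
    have := (((h1.const_add (1 / s)).sub h2).const_mul Complex.I)
    convert! this using 2
    rw [Complex.cot_pi_eq_exp_ratio]
    have e1 : Complex.exp (2 * π * Complex.I * s) = - (Complex.exp (2 * π * x))⁻¹ := by
      rw [← Complex.exp_neg, show 2 * π * Complex.I * s = π * Complex.I + -(2 * π * x) by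
        rw [hs]; linear_combination 2 * (π : ℂ) * x * Complex.I_sq, Complex.exp_add,
        Complex.exp_pi_mul_I]
      ring
    rw [e1]
    push_cast
    have b1 := Complex.exp_ne_zero (2 * π * x)
    have b2 : Complex.exp (2 * π * x) + 1 ≠ 0 := by
      have : Real.exp (2 * π * x) + 1 ≠ 0 := by positivity
      exact_mod_cast this
    have b3 := Complex.I_ne_zero
    generalize Complex.exp (2 * π * x) = E at *
    have b4 : 1 - - E⁻¹ = (E + 1) / E := by field_simp; ring
    rw [b4]
    field_simp
    ring
  have h4 := (Complex.continuous_re.tendsto _).comp h3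
  exact h4

lemma aux_atan (a : ℝ) (ha : 0 < a) (x : ℝ) :
    HasDerivAt (fun x => Real.arctan (x / a)) (a / (x ^ 2 + a ^ 2)) x := by
  have := ((hasDerivAt_id x).div_const a).arctan
  convert! this using 1
  simp
  field_simp
  ring

lemma aux_atan_lim (a : ℝ) (ha : 0 < a) :
    Tendsto (fun x => Real.arctan (x / a)) atTop (nhds (π / 2)) :=
  (Real.tendsto_arctan_atTop.mono_right nhdsWithin_le_nhds).comp
    (tendsto_id.atTop_div_const ha)

lemma aux_frac (a c : ℝ) (ha : 0 < a) (hc : 0 < c) :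
    IntegrableOn (fun x : ℝ => x ^ 2 / ((x ^ 2 + c ^ 2) * (x ^ 2 + a ^ 2))) (Set.Ioi 0) ∧
    ∫ x in Set.Ioi (0 : ℝ), x ^ 2 / ((x ^ 2 + c ^ 2) * (x ^ 2 + a ^ 2)) = π / 2 / (a + c) := by
  have main : ∃ G : ℝ → ℝ, (∀ x, HasDerivAt G (x ^ 2 / ((x ^ 2 + c ^ 2) * (x ^ 2 + a ^ 2))) x) ∧
      G 0 = 0 ∧ Tendsto G atTop (nhds (π / 2 / (a + c))) := by
    rcases eq_or_ne a c with rfl | hac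
    · refine ⟨fun x => (Real.arctan (x / a) / a - x / (x ^ 2 + a ^ 2)) / 2, ?_, by simp, ?_⟩
      · intro x
        have h := ((((aux_atan a ha x).div_const a).sub ((hasDerivAt_id x).div
          (((hasDerivAt_id x).pow 2).add_const (a ^ 2)) (by simp; positivity))).div_const 2)
        convert! h using 1
        simp
        field_simp
        ring
      · have h0 : Tendsto (fun x : ℝ => x / (x ^ 2 + a ^ 2)) atTop (nhds 0) := by
          refine squeeze_zero' (g := fun x : ℝ => x⁻¹) ?_ ?_ tendsto_inv_atTop_zero
          · filter_upwards [eventually_gt_atTop 0] with x hx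
            positivity
          · filter_upwards [eventually_gt_atTop 0] with x hx
            rw [inv_eq_one_div, div_le_div_iff₀ (by positivity) hx]
            nlinarith
        have := ((((aux_atan_lim a ha).div_const a).sub h0).div_const 2)
        convert! this using 2
        field_simp
        ring
    · have hd : a ^ 2 - c ^ 2 ≠ 0 := by
        rw [sq_sub_sq]
        exact mul_ne_zero (by positivity) (sub_ne_zero.2 hac)
      refine ⟨fun x => (a * Real.arctan (x / a) - c * Real.arctan (x / c)) / (a ^ 2 - c ^ 2),
        ?_, by simp, ?_⟩
      · intro x
        have h := ((((aux_atan a ha x).const_mul a).sub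
          ((aux_atan c hc x).const_mul c)).div_const (a ^ 2 - c ^ 2))
        convert! h using 1
        field_simp
        ring
      · have := ((((aux_atan_lim a ha).const_mul a).sub
          ((aux_atan_lim c hc).const_mul c)).div_const (a ^ 2 - c ^ 2))
        convert! this using 2
        field_simp
        ring
  obtain ⟨G, hG, hG0, hGl⟩ := main
  refine ⟨integrableOn_Ioi_deriv_of_nonneg' (fun x _ => hG x) (fun x _ => by positivity) hGl, ?_⟩
  rw [integral_Ioi_of_hasDerivAt_of_nonneg' (fun x _ => hG x) (fun x _ => by positivity) hGl, hG0,
    sub_zero]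

lemma aux_log (a b : ℝ) (ha : 0 < a) (hab : a ≤ b) :
    IntegrableOn (fun x : ℝ => x / (x ^ 2 + a ^ 2) - x / (x ^ 2 + b ^ 2)) (Set.Ioi 0) ∧
    ∫ x in Set.Ioi (0 : ℝ), (x / (x ^ 2 + a ^ 2) - x / (x ^ 2 + b ^ 2))
      = Real.log b - Real.log a := by
  have hb : 0 < b := by linarith
  have hG : ∀ x : ℝ, HasDerivAt (fun x : ℝ => (Real.log (x ^ 2 + a ^ 2) -
      Real.log (x ^ 2 + b ^ 2)) / 2) (x / (x ^ 2 + a ^ 2) - x / (x ^ 2 + b ^ 2)) x := by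
    intro x
    have := ((((((hasDerivAt_id x).pow 2).add_const (a ^ 2)).log (by simp; positivity)).sub
      ((((hasDerivAt_id x).pow 2).add_const (b ^ 2)).log (by simp; positivity))).div_const 2)
    convert! this using 1
    simp
    field_simp
  have hpos : ∀ x ∈ Set.Ioi (0 : ℝ), 0 ≤ x / (x ^ 2 + a ^ 2) - x / (x ^ 2 + b ^ 2) := by
    intro x hx
    have hx : 0 < x := hx
    rw [sub_nonneg]
    gcongr
  have hl : Tendsto (fun x : ℝ => (Real.log (x ^ 2 + a ^ 2) -
      Real.log (x ^ 2 + b ^ 2)) / 2) atTop (nhds 0) := by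
    have h1 : Tendsto (fun x : ℝ => 1 + (a ^ 2 - b ^ 2) / (x ^ 2 + b ^ 2)) atTop (nhds (1 + 0)) := by
      apply Tendsto.const_add
      apply Tendsto.const_div_atTop
      apply tendsto_atTop_add_const_right
      exact tendsto_pow_atTop two_ne_zero
    have h2 := (h1.log (by norm_num)).div_const 2
    simp only [add_zero, Real.log_one, zero_div] at h2
    refine h2.congr (fun x => ?_)
    rw [← Real.log_div (by positivity) (by positivity)]
    congr 2
    field_simp
    ring
  refine ⟨integrableOn_Ioi_deriv_of_nonneg' (fun x _ => hG x) hpos hl, ?_⟩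
  rw [integral_Ioi_of_hasDerivAt_of_nonneg' (fun x _ => hG x) hpos hl]
  simp
  ring

lemma aux_bound (z x : ℝ) (hz : 0 < z) (hx : 0 < x) :
    x / ((Real.exp (2 * π * x) + 1) * (x ^ 2 + z ^ 2)) ≤ 1 / (2 * z) * Real.exp (-(2 * π) * x) := by
  rw [neg_mul, Real.exp_neg]
  have hE := Real.exp_pos (2 * π * x)
  generalize Real.exp (2 * π * x) = E at *
  rw [one_div, ← mul_inv, inv_eq_one_div, div_le_div_iff₀ (by positivity) (by positivity)]
  nlinarith [mul_nonneg hE.le (sq_nonneg (x - z)), sq_nonneg x, sq_nonneg z]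

lemma aux_int (z : ℝ) (hz : 0 < z) :
    IntegrableOn (fun x : ℝ => x / ((Real.exp (2 * π * x) + 1) * (x ^ 2 + z ^ 2))) (Set.Ioi 0) := by
  have h := (integrableOn_exp_mul_Ioi (a := -(2 * π)) (by linarith [Real.pi_pos]) 0).const_mul
    (1 / (2 * z))
  refine Integrable.mono' h (Measurable.aestronglyMeasurable (by fun_prop)) ?_
  filter_upwards [ae_restrict_mem measurableSet_Ioi] with x hx
  have hx : 0 < x := hx
  rw [Real.norm_of_nonneg (by positivity)]
  exact aux_bound z x hz hx

lemma aux_lim : Tendsto (fun z : ℝ =>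
    ∫ x in Set.Ioi (0 : ℝ), x / ((Real.exp (2 * π * x) + 1) * (x ^ 2 + z ^ 2))) atTop (nhds 0) := by
  set K := ∫ x in Set.Ioi (0 : ℝ), Real.exp (-(2 * π) * x)
  refine squeeze_zero' (g := fun z => 1 / (2 * z) * K) ?_ ?_ ?_
  · filter_upwards [eventually_gt_atTop 0] with z hz
    refine setIntegral_nonneg measurableSet_Ioi (fun x hx => ?_)
    have hx : 0 < x := hx
    positivity
  · filter_upwards [eventually_gt_atTop 0] with z hz
    rw [← integral_const_mul]
    refine setIntegral_mono_on (aux_int z hz) ?_ measurableSet_Ioi (fun x hx => aux_bound z x hz hx)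
    exact (integrableOn_exp_mul_Ioi (a := -(2 * π)) (by linarith [Real.pi_pos]) 0).const_mul _
  · have : Tendsto (fun z : ℝ => 1 / (2 * z)) atTop (nhds 0) := by
      apply Tendsto.const_div_atTop
      exact tendsto_id.const_mul_atTop (by norm_num)
    simpa using this.mul_const K

lemma aux_tele (z : ℝ) (hz : 0 < z) :
    HasSum (fun k : ℕ => 1 / (z + ((k : ℝ) + 1 / 2)) - 1 / (z + 1 + ((k : ℝ) + 1 / 2)))
      (1 / (z + 1 / 2)) := by
  rw [hasSum_iff_tendsto_nat_of_nonneg]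
  · have : ∀ n : ℕ, ∑ k ∈ Finset.range n, (1 / (z + ((k : ℝ) + 1 / 2)) -
        1 / (z + 1 + ((k : ℝ) + 1 / 2))) = 1 / (z + 1 / 2) - 1 / ((n : ℝ) + (z + 1 / 2)) := by
      intro n
      induction n with
      | zero => simp
      | succ n ih =>
        rw [Finset.sum_range_succ, ih]
        push_cast
        rw [show z + ((n : ℝ) + 1 / 2) = n + (z + 1 / 2) by ring,
          show z + 1 + ((n : ℝ) + 1 / 2) = n + 1 + (z + 1 / 2) by ring]
        ring
    simp_rw [this]
    have h : Tendsto (fun n : ℕ => 1 / ((n : ℝ) + (z + 1 / 2))) atTop (nhds 0) := by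
      apply Tendsto.const_div_atTop
      apply tendsto_atTop_add_const_right
      exact tendsto_natCast_atTop_atTop
    simpa using h.const_sub (1 / (z + 1 / 2))
  · intro k
    rw [sub_nonneg]
    apply one_div_le_one_div_of_le (by positivity)
    linarith

lemma aux_shift (z : ℝ) (hz : 0 < z) :
    2 * (∫ x in Set.Ioi (0 : ℝ), x / ((Real.exp (2 * π * x) + 1) * (x ^ 2 + z ^ 2))) -
    2 * (∫ x in Set.Ioi (0 : ℝ), x / ((Real.exp (2 * π * x) + 1) * (x ^ 2 + (z + 1) ^ 2)))
    = Real.log (z + 1) - Real.log z - 1 / (z + 1 / 2) := by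
  have hz1 : 0 < z + 1 := by linarith
  set D : ℝ → ℝ := fun x => x / (x ^ 2 + z ^ 2) - x / (x ^ 2 + (z + 1) ^ 2) with hD
  obtain ⟨hDi, hDv⟩ := aux_log z (z + 1) hz (by linarith)
  set F : ℕ → ℝ → ℝ := fun k x => 2 / π * (x ^ 2 / ((x ^ 2 + ((k : ℝ) + 1 / 2) ^ 2) * (x ^ 2 + z ^ 2))
    - x ^ 2 / ((x ^ 2 + ((k : ℝ) + 1 / 2) ^ 2) * (x ^ 2 + (z + 1) ^ 2))) with hF
  have hFi : ∀ k, Integrable (F k) (volume.restrict (Set.Ioi 0)) := fun k =>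
    ((aux_frac z (k + 1 / 2) hz (by positivity)).1.sub
      (aux_frac (z + 1) (k + 1 / 2) hz1 (by positivity)).1).const_mul _
  have hFv : ∀ k : ℕ, ∫ x in Set.Ioi (0 : ℝ), F k x =
      1 / (z + ((k : ℝ) + 1 / 2)) - 1 / (z + 1 + ((k : ℝ) + 1 / 2)) := by
    intro k
    simp only [hF]
    rw [integral_const_mul, integral_sub (aux_frac z (k + 1 / 2) hz (by positivity)).1
      (aux_frac (z + 1) (k + 1 / 2) hz1 (by positivity)).1,
      (aux_frac z (k + 1 / 2) hz (by positivity)).2,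
      (aux_frac (z + 1) (k + 1 / 2) hz1 (by positivity)).2]
    have := Real.pi_pos
    field_simp
  have hF0 : ∀ k, ∀ x ∈ Set.Ioi (0 : ℝ), 0 ≤ F k x := by
    intro k x hx
    have hx : 0 < x := hx
    simp only [hF]
    apply mul_nonneg (by positivity)
    rw [sub_nonneg]
    gcongr
    linarith
  have hFn : ∀ k : ℕ, ∫ x in Set.Ioi (0 : ℝ), ‖F k x‖ = ∫ x in Set.Ioi (0 : ℝ), F k x := fun k =>
    setIntegral_congr_fun measurableSet_Ioi (fun x hx => Real.norm_of_nonneg (hF0 k x hx))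
  have hsum := hasSum_integral_of_summable_integral_norm hFi (by
    simp_rw [hFn, hFv]; exact (aux_tele z hz).summable)
  simp_rw [hFv] at hsum
  have hS := hsum.unique (aux_tele z hz)
  have hpt : ∀ x ∈ Set.Ioi (0 : ℝ), ∑' k, F k x = D x -
      (2 * (x / ((Real.exp (2 * π * x) + 1) * (x ^ 2 + z ^ 2))) -
       2 * (x / ((Real.exp (2 * π * x) + 1) * (x ^ 2 + (z + 1) ^ 2)))) := by
    intro x hx
    have hx : 0 < x := hx
    have h := (aux_tanh x hx).mul_left (1 / π * D x)
    have hFe : (fun k => F k x) = fun k : ℕ => 1 / π * D x *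
        (2 * x / (x ^ 2 + ((k : ℝ) + 1 / 2) ^ 2)) := by
      funext k
      simp only [hF, hD]
      field_simp
    rw [hFe, h.tsum_eq]
    simp only [hD]
    have := Real.pi_pos
    field_simp
  rw [setIntegral_congr_fun measurableSet_Ioi hpt] at hS
  have i1 := (aux_int z hz).const_mul 2
  have i2 := (aux_int (z + 1) hz1).const_mul 2
  have e1 := integral_sub hDi (i1.sub i2)
  simp only [Pi.sub_apply] at e1
  simp only [hD] at hS
  rw [e1, hDv, integral_sub i1 i2, integral_const_mul,
    integral_const_mul] at hS
  linarith

lemma aux_diff_s15 {x : ℝ} (hx : 0 < x) :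
    DifferentiableAt ℝ (fun t => Real.log (Real.Gamma t)) x := by
  refine ((Real.differentiableAt_Gamma ?_).log (Real.Gamma_ne_zero ?_)) <;>
    exact fun m => ne_of_gt (by have := Nat.cast_nonneg (α := ℝ) m; linarith)

lemma aux_rec {x : ℝ} (hx : 0 < x) :
    Real.log (Real.Gamma (x + 1)) = Real.log (Real.Gamma x) + Real.log x := by
  rw [Real.Gamma_add_one hx.ne', Real.log_mul hx.ne' (Real.Gamma_pos_of_pos hx).ne', add_comm]

lemma aux_digamma_succ {x : ℝ} (hx : 0 < x) : digamma (x + 1) = digamma x + 1 / x := by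
  unfold digamma
  rw [← deriv_comp_add_const]
  have h : (fun t => Real.log (Real.Gamma (t + 1))) =ᶠ[nhds x]
      fun t => Real.log (Real.Gamma t) + Real.log t := by
    filter_upwards [lt_mem_nhds hx] with t ht using aux_rec ht
  rw [h.deriv_eq, deriv_fun_add (aux_diff_s15 hx) (Real.differentiableAt_log hx.ne'), Real.deriv_log,
    one_div]

lemma aux_digamma_le {x : ℝ} (hx : 0 < x) : digamma x ≤ Real.log x := by
  have := Real.convexOn_log_Gamma.deriv_le_slope (x := x) (y := x + 1) hx
    (by simp; linarith) (by linarith) (aux_diff_s15 hx)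
  rw [slope_def_field] at this
  simp only [Function.comp_apply] at this
  rw [aux_rec hx] at this
  simpa [digamma, Function.comp_def] using this

lemma aux_le_digamma {x : ℝ} (hx : 0 < x) : Real.log x ≤ digamma (x + 1) := by
  rw [aux_digamma_succ hx]
  have := Real.convexOn_log_Gamma.slope_le_deriv (x := x) (y := x + 1) hx
    (by simp; linarith) (by linarith) (aux_diff_s15 (by linarith))
  rw [slope_def_field] at this
  simp only [Function.comp_apply] at this
  rw [aux_rec hx] at this
  rw [← aux_digamma_succ hx]
  simpa [digamma, Function.comp_def] using this

lemma aux_log_lim (c : ℝ) :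
    Tendsto (fun z : ℝ => Real.log (z + c) - Real.log z) atTop (nhds 0) := by
  have h1 : Tendsto (fun z : ℝ => 1 + c / z) atTop (nhds (1 + 0)) :=
    (tendsto_id.const_div_atTop c).const_add 1
  have h2 := h1.log (by norm_num)
  simp only [add_zero, Real.log_one] at h2
  refine h2.congr' ?_
  filter_upwards [eventually_gt_atTop 0, eventually_gt_atTop (-c)] with z hz hc
  rw [← Real.log_div (by linarith) hz.ne']
  congr 1
  field_simp

lemma aux_digamma_lim :
    Tendsto (fun z : ℝ => digamma (z + 1 / 2) - Real.log z) atTop (nhds 0) := by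
  refine tendsto_of_tendsto_of_tendsto_of_le_of_le' (aux_log_lim (-(1 / 2))) (aux_log_lim (1 / 2)) ?_ ?_
  · filter_upwards [eventually_gt_atTop 1] with z hz
    have := aux_le_digamma (x := z + -(1 / 2)) (by linarith)
    rw [show z + -(1 / 2) + 1 = z + 1 / 2 by ring] at this
    linarith
  · filter_upwards [eventually_gt_atTop 1] with z hz
    have := aux_digamma_le (x := z + 1 / 2) (by linarith)
    linarith

/-- 2 ∫₀^∞ x/((e^{2πx}+1)(x²+z²)) dx = ψ(z+1/2) − log z, z > 0. -/
theorem integral_x_div_exp_add_one (z : ℝ) (hz : 0 < z) :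
    2 * (∫ x in Set.Ioi (0 : ℝ), x / ((Real.exp (2 * π * x) + 1) * (x ^ 2 + z ^ 2))) =
      digamma (z + 1 / 2) - Real.log z := by
  set P : ℝ → ℝ := fun z =>
    2 * (∫ x in Set.Ioi (0 : ℝ), x / ((Real.exp (2 * π * x) + 1) * (x ^ 2 + z ^ 2))) -
      (digamma (z + 1 / 2) - Real.log z) with hP
  have hlim : Tendsto P atTop (nhds 0) := by
    have := (aux_lim.const_mul 2).sub aux_digamma_lim
    rw [mul_zero, sub_zero] at this
    exact this
  have hper : ∀ w : ℝ, 0 < w → P (w + 1) = P w := by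
    intro w hw
    have h1 := aux_shift w hw
    have h2 := aux_digamma_succ (x := w + 1 / 2) (by linarith)
    rw [show w + 1 / 2 + 1 = w + 1 + 1 / 2 by ring] at h2
    simp only [hP]
    linarith
  have hn : ∀ n : ℕ, P (z + n) = P z := by
    intro n
    induction n with
    | zero => simp
    | succ n ih =>
      rw [← ih, ← hper (z + n) (by positivity)]
      push_cast
      rw [add_assoc]
  have h1 : Tendsto (fun n : ℕ => P (z + n)) atTop (nhds 0) :=
    hlim.comp (tendsto_atTop_add_const_left _ _ tendsto_natCast_atTop_atTop)
  simp_rw [hn] at h1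
  have := tendsto_nhds_unique h1 tendsto_const_nhds
  simp only [hP] at this
  linarith
end

section
/- For every real z > −1, the Barnes G-function satisfies log G(z+1) = z(1−z)/2 + (z/2)·log(2π) + ∫₀^z x·ψ(x) dx, where ψ is the digamma function. -/
open Real MeasureTheory Filter

theorem bg_taylor (φ0 φ1 φ2 φ3 : ℝ → ℂ) (a M : ℝ) (ha : 0 ≤ a)
    (h0 : ∀ t ∈ Set.Icc 0 a, HasDerivAt φ0 (φ1 t) t)
    (h1 : ∀ t ∈ Set.Icc 0 a, HasDerivAt φ1 (φ2 t) t)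
    (h2 : ∀ t ∈ Set.Icc 0 a, HasDerivAt φ2 (φ3 t) t)
    (hM : ∀ t ∈ Set.Icc 0 a, ‖φ3 t‖ ≤ M) :
    ‖φ0 a - φ0 0 - a * φ1 0 - a ^ 2 / 2 * φ2 0‖ ≤ M * a ^ 3 := by
  have hM0 : 0 ≤ M := le_trans (norm_nonneg _) (hM 0 ⟨le_rfl, ha⟩)
  have e2 : ∀ t ∈ Set.Icc 0 a, ‖φ2 t - φ2 0‖ ≤ M * a := by
    intro t ht
    have := norm_image_sub_le_of_norm_deriv_le_segment' (f := φ2) (f' := φ3) (a := 0) (b := a)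
      (C := M) (fun x hx => (h2 x hx).hasDerivWithinAt)
      (fun x hx => hM x ⟨hx.1, hx.2.le⟩) t ht
    refine this.trans ?_
    have := ht.2
    gcongr; linarith
  have e1 : ∀ t ∈ Set.Icc 0 a, ‖φ1 t - t * φ2 0 - φ1 0‖ ≤ M * a * a := by
    intro t ht
    have := norm_image_sub_le_of_norm_deriv_le_segment' (f := fun t : ℝ => φ1 t - t * φ2 0)
      (f' := fun t => φ2 t - φ2 0) (a := 0) (b := a)
      (C := M * a) (fun x hx => by
        have := (h1 x hx).fun_sub (((hasDerivAt_id (x:ℂ)).comp_ofReal).mul_const (φ2 0))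
        simpa using this.hasDerivWithinAt)
      (fun x hx => e2 x ⟨hx.1, hx.2.le⟩) t ht
    simp only [Complex.ofReal_zero, zero_mul, sub_zero] at this
    refine this.trans ?_
    have := ht.2
    gcongr
  have e0 : ∀ t ∈ Set.Icc 0 a, ‖φ0 t - t * φ1 0 - t ^ 2 / 2 * φ2 0 - φ0 0‖ ≤ M * a * a * a := by
    intro t ht
    have := norm_image_sub_le_of_norm_deriv_le_segment'
      (f := fun t : ℝ => φ0 t - t * φ1 0 - t ^ 2 / 2 * φ2 0)
      (f' := fun t => φ1 t - t * φ2 0 - φ1 0) (a := 0) (b := a)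
      (C := M * a * a) (fun x hx => by
        have := ((h0 x hx).fun_sub (((hasDerivAt_id (x:ℂ)).comp_ofReal).mul_const (φ1 0))).fun_sub
          ((((hasDerivAt_pow 2 (x:ℂ)).comp_ofReal).div_const 2).mul_const (φ2 0))
        refine HasDerivAt.hasDerivWithinAt (this.congr_deriv ?_)
        push_cast
        ring)
      (fun x hx => e1 x ⟨hx.1, hx.2.le⟩) t ht
    simp only [Complex.ofReal_zero, zero_mul, sub_zero, ne_eq, OfNat.ofNat_ne_zero, not_false_eq_true, zero_pow, zero_div] at this
    refine this.trans ?_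
    have := ht.2
    gcongr
  have := e0 a ⟨ha, le_rfl⟩
  calc _ = _ := by congr 1; ring
    _ ≤ _ := this
    _ = _ := by ring

theorem bg_cpow_deriv (x : ℝ) (r : ℂ) (t : ℝ) (h : 0 < x + t) :
    HasDerivAt (fun t : ℝ => ((x + t : ℝ) : ℂ) ^ r) (r * ((x + t : ℝ) : ℂ) ^ (r - 1)) t := by
  have h1 : HasDerivAt (fun z : ℂ => ((x : ℂ) + z) ^ r) (r * ((x:ℂ) + t) ^ (r - 1) * 1) (t : ℂ) := by
    refine HasDerivAt.cpow_const ((hasDerivAt_id (t:ℂ)).const_add _) ?_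
    left
    simpa using h
  simpa using h1.comp_ofReal

/-- The summand. -/
noncomputable def bgTerm (a : ℝ) (n : ℕ) (s : ℂ) : ℂ :=
  ((n + 1 + a : ℝ) : ℂ) ^ (-s) - ((n + 1 : ℝ) : ℂ) ^ (-s)
    + a * (s * ((n + 1 : ℝ) : ℂ) ^ (-(s + 1)))
    - a ^ 2 / 2 * (s * ((s + 1) * ((n + 1 : ℝ) : ℂ) ^ (-(s + 2))))

def bgU : Set ℂ := {s | -(3 / 2) < s.re} ∩ Metric.ball 0 4

theorem bgTerm_bound (a : ℝ) (ha : 0 ≤ a) (n : ℕ) (s : ℂ) (hs : s ∈ bgU) :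
    ‖bgTerm a n s‖ ≤ 120 * a ^ 3 * ((n + 1 : ℝ) ^ (-(3 / 2) : ℝ)) := by
  obtain ⟨hs1, hs2⟩ := hs
  simp only [Set.mem_ofPred_eq] at hs1
  simp only [Metric.mem_ball, dist_zero_right] at hs2
  have hn : (0:ℝ) < n + 1 := by positivity
  set x : ℝ := n + 1 with hx
  have hx1 : 1 ≤ x := by rw [hx]; simp
  have := bg_taylor (fun t => ((x + t : ℝ) : ℂ) ^ (-s))
    (fun t => -s * ((x + t : ℝ) : ℂ) ^ (-s-1))
    (fun t => -s * ((-s-1) * ((x + t : ℝ) : ℂ) ^ (-s-1-1)))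
    (fun t => -s * ((-s-1) * ((-s-1-1) * ((x + t : ℝ) : ℂ) ^ (-s-1-1-1)))) a
    (120 * x ^ (-(3 / 2) : ℝ)) ha
    (fun t ht => bg_cpow_deriv x _ t (by linarith [ht.1]))
    (fun t ht => (bg_cpow_deriv x _ t (by linarith [ht.1])).const_mul _)
    (fun t ht => ((bg_cpow_deriv x _ t (by linarith [ht.1])).const_mul _).const_mul _)
    (by
      intro t ht
      have hxt : x ≤ x + t := by linarith [ht.1]
      rw [norm_mul, norm_mul, norm_mul, Complex.norm_cpow_eq_rpow_re_of_pos (by linarith)]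
      have b1 : ‖-s‖ ≤ 4 := by rw [norm_neg]; exact hs2.le
      have b2 : ‖-s-1‖ ≤ 5 := by
        calc _ ≤ ‖-s‖ + ‖(1:ℂ)‖ := norm_sub_le _ _
          _ ≤ 5 := by rw [norm_one]; linarith
      have b3 : ‖-s-1-1‖ ≤ 6 := by
        calc _ ≤ ‖-s-1‖ + ‖(1:ℂ)‖ := norm_sub_le _ _
          _ ≤ 6 := by rw [norm_one]; linarith
      have b4 : (x + t) ^ (-s-1-1-1).re ≤ x ^ (-(3 / 2) : ℝ) := by
        calc (x + t) ^ (-s-1-1-1).re ≤ (x + t) ^ (-(3/2) : ℝ) := by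
              apply Real.rpow_le_rpow_of_exponent_le (by linarith)
              simp; linarith
          _ ≤ _ := Real.rpow_le_rpow_of_nonpos (by linarith) hxt (by norm_num)
      have b5 : (0:ℝ) ≤ (x + t) ^ (-s-1-1-1).re := Real.rpow_nonneg (by linarith) _
      calc _ ≤ 4 * (5 * (6 * x ^ (-(3 / 2) : ℝ))) := by gcongr
        _ = _ := by ring)
  unfold bgTerm
  rw [← hx]
  refine le_trans (le_of_eq ?_) (this.trans (le_of_eq (by ring)))
  congr 1
  simp only [add_zero]
  rw [show -s-1-1 = -(s+2) by ring, show -s-1 = -(s+1) by ring]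
  ring

theorem bgTerm_diff (a : ℝ) (ha : 0 ≤ a) (n : ℕ) : Differentiable ℂ (bgTerm a n) := by
  have h1 : ((n + 1 + a : ℝ) : ℂ) ≠ 0 := by
    have : (0:ℝ) < n + 1 + a := by positivity
    exact_mod_cast this.ne'
  have h2 : ((n + 1 : ℝ) : ℂ) ≠ 0 := by
    have : (0:ℝ) < n + 1 := by positivity
    exact_mod_cast this.ne'
  unfold bgTerm
  intro s
  have k1 : DifferentiableAt ℂ (fun s : ℂ => ((n + 1 + a : ℝ) : ℂ) ^ (-s)) s :=
    DifferentiableAt.const_cpow (by fun_prop) (Or.inl h1)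
  have k2 : DifferentiableAt ℂ (fun s : ℂ => ((n + 1 : ℝ) : ℂ) ^ (-s)) s :=
    DifferentiableAt.const_cpow (by fun_prop) (Or.inl h2)
  have k3 : DifferentiableAt ℂ (fun s : ℂ => ((n + 1 : ℝ) : ℂ) ^ (-(s + 1))) s :=
    DifferentiableAt.const_cpow (by fun_prop) (Or.inl h2)
  have k4 : DifferentiableAt ℂ (fun s : ℂ => ((n + 1 : ℝ) : ℂ) ^ (-(s + 2))) s :=
    DifferentiableAt.const_cpow (by fun_prop) (Or.inl h2)
  fun_prop

theorem bg_summable (a : ℝ) : Summable (fun n : ℕ => 120 * a ^ 3 * ((n + 1 : ℝ) ^ (-(3 / 2) : ℝ))) := by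
  apply Summable.mul_left
  have := (Real.summable_nat_rpow (p := -(3/2))).2 (by norm_num)
  simpa using (summable_nat_add_iff 1).2 this

/-- real summand -/
noncomputable def bgu (n : ℕ) (a : ℝ) : ℝ :=
  (n + 1) * Real.log (n + 1) - (n + 1 + a) * Real.log (n + 1 + a) + a * (1 + Real.log (n + 1))
    + a ^ 2 / 2 / (n + 1)

theorem bg_const_cpow (x : ℝ) (hx : 0 < x) (g : ℂ → ℂ) (s : ℂ) (hg : HasDerivAt g (-1) s) :
    HasDerivAt (fun s : ℂ => (x : ℂ) ^ (g s)) (-((x:ℂ) ^ (g s) * Real.log x)) s := by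
  have := hg.const_cpow (c := (x:ℂ)) (Or.inl (by exact_mod_cast hx.ne'))
  rw [Complex.ofReal_log hx.le]
  simpa using this

theorem bgTerm_deriv (a : ℝ) (ha : 0 ≤ a) (n : ℕ) : deriv (bgTerm a n) (-1) = (bgu n a : ℂ) := by
  have h1 : (0:ℝ) < n + 1 + a := by positivity
  have h2 : (0:ℝ) < n + 1 := by positivity
  have g0 : HasDerivAt (fun s : ℂ => -s) (-1) (-1) := (hasDerivAt_id (-1:ℂ)).neg
  have g1 : HasDerivAt (fun s : ℂ => -(s+1)) (-1) (-1) := ((hasDerivAt_id (-1:ℂ)).add_const _).neg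
  have g2 : HasDerivAt (fun s : ℂ => -(s+2)) (-1) (-1) := ((hasDerivAt_id (-1:ℂ)).add_const _).neg
  have i0 : HasDerivAt (fun s : ℂ => s) 1 (-1) := hasDerivAt_id _
  have i1 : HasDerivAt (fun s : ℂ => s+1) 1 (-1) := (hasDerivAt_id (-1:ℂ)).add_const _
  have := (((bg_const_cpow _ h1 _ _ g0).sub (bg_const_cpow _ h2 _ _ g0)).add
    ((i0.mul (bg_const_cpow _ h2 _ _ g1)).const_mul (a:ℂ))).sub
    ((i0.mul (i1.mul (bg_const_cpow _ h2 _ _ g2))).const_mul ((a:ℂ)^2/2))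
  have h3 := this.deriv
  have h4 : deriv (bgTerm a n) (-1) = _ := h3
  rw [h4]
  have e1 : (-(-1 + 2) : ℂ) = -1 := by norm_num
  have hne : ((n:ℂ) + 1) ≠ 0 := by exact_mod_cast h2.ne'
  simp only [Pi.mul_apply, neg_neg, neg_add_cancel, neg_zero, e1, Complex.cpow_one, Complex.cpow_zero, Complex.cpow_neg_one]
  unfold bgu
  push_cast
  field_simp
  ring

theorem bg_hasSum (a : ℝ) (ha : 0 < a) (s : ℂ) (hs : 1 < s.re) :
    HasSum (fun n : ℕ => ((n + a : ℝ) : ℂ) ^ (-s)) (hurwitzZetaReal s a) := by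
  set m := ⌈a⌉₊ - 1 with hm
  have hc : 0 < ⌈a⌉₊ := Nat.ceil_pos.2 ha
  have hm1 : ⌈a⌉₊ = m + 1 := by omega
  have hmr : ((⌈a⌉₊ : ℝ) - 1) = m := by rw [hm1]; push_cast; ring
  have h1 : a ≤ m + 1 := by have := Nat.le_ceil a; rw [hm1] at this; exact_mod_cast this
  have h2 : (m : ℝ) < a := by have := Nat.ceil_lt_add_one ha.le; rw [hm1] at this; push_cast at this; linarith
  have key := HurwitzZeta.hasSum_hurwitzZeta_of_one_lt_re (a := a - m) ⟨by linarith, by linarith⟩ hs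
  have hcirc : ((a - m : ℝ) : UnitAddCircle) = (a : UnitAddCircle) := by
    rw [AddCircle.coe_sub]
    have : ((m : ℝ) : UnitAddCircle) = 0 := by
      have := AddCircle.coe_eq_zero_iff (1:ℝ) (x := (m:ℝ))
      rw [this]
      exact ⟨m, by simp⟩
    rw [this, sub_zero]
  rw [hcirc] at key
  have h3 := (hasSum_nat_add_iff' m).2 key
  unfold hurwitzZetaReal
  rw [← hm, hmr]
  convert! h3 using 1
  · ext n
    rw [Complex.cpow_neg, one_div]
    push_cast
    congr 2
    ring
  · congr 1
    apply Finset.sum_congr rfl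
    intro k _
    rw [Complex.cpow_neg, one_div]
    push_cast
    congr 2
    ring

theorem bg_hasSum_zeta (s : ℂ) (hs : 1 < s.re) :
    HasSum (fun n : ℕ => ((n + 1 : ℝ) : ℂ) ^ (-s)) (riemannZeta s) := by
  have := bg_hasSum 1 one_pos s hs
  have h : hurwitzZetaReal s 1 = riemannZeta s := by
    unfold hurwitzZetaReal
    have : ((1 : ℝ) : UnitAddCircle) = 0 := AddCircle.coe_period 1
    rw [this]
    simp [HurwitzZeta.hurwitzZeta_zero]
  rwa [h] at this

/-- entire continuation -/
noncomputable def bgW (a : ℝ) (s : ℂ) : ℂ :=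
  (hurwitzZetaReal s a - riemannZeta s) - (a : ℂ) ^ (-s) + a * riemannZeta₁ (s + 1)
    - a ^ 2 / 2 * (s * riemannZeta₁ (s + 2))

theorem bgW_diff (a : ℝ) (ha : 0 < a) : Differentiable ℂ (bgW a) := by
  have h0 : Differentiable ℂ (fun s => hurwitzZetaReal s a - riemannZeta s) := by
    have h1 := HurwitzZeta.differentiable_hurwitzZeta_sub_hurwitzZeta (a : UnitAddCircle) 0
    have h2 : Differentiable ℂ (fun s : ℂ => ∑ k ∈ Finset.range (⌈a⌉₊ - 1), ((a - (⌈a⌉₊ - 1) + k : ℝ) : ℂ) ^ (-s)) := by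
      apply Differentiable.fun_sum
      intro k _ s
      refine DifferentiableAt.const_cpow (by fun_prop) (Or.inl ?_)
      have := Nat.ceil_lt_add_one ha.le
      have : (0:ℝ) < a - (⌈a⌉₊ - 1) + k := by
        have : (0:ℝ) ≤ k := by positivity
        linarith
      exact_mod_cast this.ne'
    have h3 := h1.fun_sub h2
    convert! h3 using 1
    ext s
    unfold hurwitzZetaReal
    simp only [HurwitzZeta.hurwitzZeta_zero]
    ring
  have h1 : Differentiable ℂ (fun s : ℂ => (a : ℂ) ^ (-s)) := fun s =>
    DifferentiableAt.const_cpow (by fun_prop) (Or.inl (by exact_mod_cast ha.ne'))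
  unfold bgW
  fun_prop

theorem bgW_hasSum (a : ℝ) (ha : 0 < a) (s : ℂ) (hs : 1 < s.re) :
    HasSum (fun n => bgTerm a n s) (bgW a s) := by
  have h1 := (hasSum_nat_add_iff' 1).2 (bg_hasSum a ha s hs)
  have h2 := bg_hasSum_zeta s hs
  have h3 := bg_hasSum_zeta (s + 1) (by simp; linarith)
  have h4 := bg_hasSum_zeta (s + 2) (by simp; linarith)
  have h5 := ((h1.sub h2).add ((h3.mul_left s).mul_left (a:ℂ))).sub
    (((h4.mul_left (s+1)).mul_left s).mul_left ((a:ℂ)^2/2))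
  have s0 : s ≠ 0 := by rintro rfl; simp at hs; linarith
  have s1 : s + 1 ≠ 0 := by
    intro h; have := congrArg Complex.re h; simp at this; linarith
  convert! h5 using 1
  · ext n
    unfold bgTerm
    push_cast
    ring_nf
  · unfold bgW
    rw [riemannZeta_eq_inv_sub_mul (s := s + 1) (by simpa using s0),
      riemannZeta_eq_inv_sub_mul (s := s + 2) (by intro h; apply s1; linear_combination h)]
    have : s + 2 - 1 = s + 1 := by ring
    rw [this, add_sub_cancel_right]
    rw [mul_inv_cancel_left₀ s0, mul_inv_cancel_left₀ s1]
    simp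
    ring

theorem bgW_eq (a : ℝ) (ha : 0 < a) : Set.EqOn (fun s => ∑' n, bgTerm a n s) (bgW a) bgU := by
  have hUo : IsOpen bgU := (isOpen_lt continuous_const Complex.continuous_re).inter Metric.isOpen_ball
  have hUc : IsPreconnected bgU :=
    ((convex_halfSpace_re_gt (-(3/2))).inter (convex_ball 0 4)).isPreconnected
  have hT : DifferentiableOn ℂ (fun s => ∑' n, bgTerm a n s) bgU :=
    Complex.differentiableOn_tsum_of_summable_norm (bg_summable a)
      (fun n => (bgTerm_diff a ha.le n).differentiableOn) hUo (fun n s hs => bgTerm_bound a ha.le n s hs)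
  refine (hT.analyticOnNhd hUo).eqOn_of_preconnected_of_eventuallyEq
    ((bgW_diff a ha).differentiableOn.analyticOnNhd hUo) hUc (z₀ := 2) ?_ ?_
  · constructor
    · simp; norm_num
    · simp; norm_num
  · have : {s : ℂ | 1 < s.re} ∈ nhds (2:ℂ) :=
      (isOpen_lt continuous_const Complex.continuous_re).mem_nhds (by simp)
    filter_upwards [this] with s hs
    exact (bgW_hasSum a ha s hs).tsum_eq

theorem bg_hasSum_u (a : ℝ) (ha : 0 < a) : HasSum (fun n => (bgu n a : ℂ)) (deriv (bgW a) (-1)) := by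
  have hUo : IsOpen bgU := (isOpen_lt continuous_const Complex.continuous_re).inter Metric.isOpen_ball
  have hm : (-1:ℂ) ∈ bgU := by
    constructor
    · simp; norm_num
    · simp
  have := Complex.hasSum_deriv_of_summable_norm (bg_summable a)
      (fun n => (bgTerm_diff a ha.le n).differentiableOn) hUo
      (fun n s hs => bgTerm_bound a ha.le n s hs) hm
  rw [((bgW_eq a ha).eventuallyEq_of_mem (hUo.mem_nhds hm)).deriv_eq] at this
  simpa only [bgTerm_deriv a ha.le] using this

theorem bg_deriv_zeta1_zero : deriv riemannZeta₁ 0 = -1/2 + (Real.log (2 * π) : ℂ) / 2 := by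
  have h1 : HasDerivAt (fun s : ℂ => (s - 1) * riemannZeta s)
      (1 * riemannZeta 0 + (0 - 1) * deriv riemannZeta 0) 0 :=
    ((hasDerivAt_id (0:ℂ)).sub_const 1).mul
      (differentiableAt_riemannZeta (by norm_num)).hasDerivAt
  have h2 : riemannZeta₁ =ᶠ[nhds 0] (fun s : ℂ => (s - 1) * riemannZeta s) := by
    filter_upwards [compl_singleton_mem_nhds (show (0:ℂ) ≠ 1 by norm_num)] with s hs
    have : s - 1 ≠ 0 := sub_ne_zero_of_ne hs
    rw [riemannZeta_eq_inv_sub_mul hs, mul_inv_cancel_left₀ this]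
  rw [h2.deriv_eq, h1.deriv, riemannZeta_zero, deriv_riemannZeta_zero,
    Complex.ofReal_log (by positivity)]
  push_cast
  ring

theorem bg_deriv_W (a : ℝ) (ha : 0 < a) : deriv (bgW a) (-1) =
    hurwitzZetaDerivNegOne a - deriv riemannZeta (-1) + a * Real.log a
      + a * (-1/2 + (Real.log (2 * π) : ℂ) / 2)
      - a ^ 2 / 2 * (1 - Real.eulerMascheroniConstant) := by
  have h0 : DifferentiableAt ℂ (fun s => hurwitzZetaReal s a) (-1) := by
    unfold hurwitzZetaReal
    refine (HurwitzZeta.differentiableAt_hurwitzZeta _ (by norm_num)).fun_sub ?_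
    apply DifferentiableAt.fun_sum
    intro k _
    refine DifferentiableAt.const_cpow (by fun_prop) (Or.inl ?_)
    have := Nat.ceil_lt_add_one ha.le
    have : (0:ℝ) < a - (⌈a⌉₊ - 1) + k := by
      have : (0:ℝ) ≤ k := by positivity
      linarith
    exact_mod_cast this.ne'
  have g0 : HasDerivAt (fun s : ℂ => -s) (-1) (-1) := (hasDerivAt_id (-1:ℂ)).neg
  have z1 : HasDerivAt (fun s : ℂ => riemannZeta₁ (s + 1)) (deriv riemannZeta₁ (-1+1)) (-1) :=
    HasDerivAt.comp_add_const (-1:ℂ) 1 (differentiable_riemannZeta₁ _).hasDerivAt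
  have z2 : HasDerivAt (fun s : ℂ => riemannZeta₁ (s + 2)) (deriv riemannZeta₁ (-1+2)) (-1) :=
    HasDerivAt.comp_add_const (-1:ℂ) 2 (differentiable_riemannZeta₁ _).hasDerivAt
  have := (((h0.hasDerivAt.sub
    (differentiableAt_riemannZeta (show (-1:ℂ) ≠ 1 by norm_num)).hasDerivAt).sub
    (bg_const_cpow a ha _ _ g0)).add (z1.const_mul (a:ℂ))).sub
    (((hasDerivAt_id (-1:ℂ)).mul z2).const_mul ((a:ℂ)^2/2))
  have h4 : deriv (bgW a) (-1) = _ := this.deriv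
  rw [h4]
  have e1 : (-1 + 2 : ℂ) = 1 := by norm_num
  rw [e1, neg_add_cancel, bg_deriv_zeta1_zero]
  simp only [deriv_riemannZeta₁_one, riemannZeta₁_one, neg_neg, Complex.cpow_one, id]
  unfold hurwitzZetaDerivNegOne
  ring

/-- The real part of the answer. -/
noncomputable def bgF (a : ℝ) : ℝ :=
  -(a * Real.log a) + a * (1/2 - Real.log (2 * π) / 2)
    + a ^ 2 / 2 * (1 - Real.eulerMascheroniConstant) + ∑' n, bgu n a

theorem bg_summable_u (a : ℝ) (ha : 0 < a) : Summable (fun n => bgu n a) :=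
  Complex.summable_ofReal.1 (bg_hasSum_u a ha).summable

theorem bg_hurwitz (a : ℝ) (ha : 0 < a) :
    hurwitzZetaDerivNegOne a = deriv riemannZeta (-1) + (bgF a : ℂ) := by
  have h1 := (bg_hasSum_u a ha).tsum_eq
  rw [← Complex.ofReal_tsum, bg_deriv_W a ha] at h1
  unfold bgF
  rw [Complex.ofReal_add, h1]
  push_cast
  ring

/-- derivative of the real summand -/
noncomputable def bgv (n : ℕ) (a : ℝ) : ℝ :=
  Real.log (n + 1) - Real.log (n + 1 + a) + a / (n + 1)

theorem bgu_deriv (n : ℕ) (a : ℝ) (ha : 0 < a) : HasDerivAt (bgu n) (bgv n a) a := by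
  have h1 : (0:ℝ) < n + 1 + a := by positivity
  have hl : HasDerivAt (fun a : ℝ => (n + 1 + a : ℝ)) 1 a := (hasDerivAt_id a).const_add _
  have := ((((hl.fun_mul (hl.log h1.ne')).const_sub ((n + 1) * Real.log (n + 1) : ℝ))).fun_add
    ((hasDerivAt_id a).mul_const (1 + Real.log (n + 1)))).fun_add
    (((hasDerivAt_pow 2 a).div_const 2).div_const ((n : ℝ) + 1))
  refine (this.congr_deriv ?_)
  unfold bgv
  have h2 : (0:ℝ) < n + 1 := by positivity
  push_cast
  field_simp
  ring

theorem bgv_bound (n : ℕ) (a : ℝ) (ha : 0 < a) : ‖bgv n a‖ ≤ a ^ 2 * (1 / ((n + 1 : ℝ)) ^ 2) := by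
  have h2 : (0:ℝ) < n + 1 := by positivity
  have h1 : (0:ℝ) < n + 1 + a := by positivity
  set x : ℝ := n + 1
  have hd : 0 < (x + a) / x := by positivity
  have e : bgv n a = a / x - Real.log ((x + a) / x) := by
    rw [Real.log_div h1.ne' h2.ne']
    unfold bgv
    ring
  rw [e, Real.norm_eq_abs, abs_le]
  have l1 := Real.log_le_sub_one_of_pos hd
  have l2 := Real.one_sub_inv_le_log_of_pos hd
  have e1 : (x + a) / x - 1 = a / x := by field_simp; ring
  have e2 : a / x - (1 - ((x + a) / x)⁻¹) = a ^ 2 / (x * (x + a)) := by field_simp; ring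
  have e3 : a ^ 2 / (x * (x + a)) ≤ a ^ 2 * (1 / x ^ 2) := by
    rw [mul_one_div]
    gcongr
    nlinarith
  have e4 : 0 ≤ a ^ 2 * (1 / x ^ 2) := by positivity
  constructor <;> linarith

theorem bg_sq_summable (R : ℝ) : Summable (fun n : ℕ => R ^ 2 * (1 / ((n + 1 : ℝ)) ^ 2)) := by
  apply Summable.mul_left
  have := (Real.summable_one_div_nat_pow (p := 2)).2 (by norm_num)
  simpa using (summable_nat_add_iff 1).2 this

theorem bgv_tsum (a : ℝ) (ha : 0 < a) : ∑' n, bgv n a =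
    Real.log (Real.Gamma a) + Real.log a + a * Real.eulerMascheroniConstant := by
  have hs : Summable (fun n => bgv n a) :=
    Summable.of_norm_bounded (bg_sq_summable a) (fun n => bgv_bound n a ha)
  have h1 := hs.hasSum.tendsto_sum_nat
  refine tendsto_nhds_unique h1 ?_
  have h2 := ((Real.BohrMollerup.tendsto_log_gamma ha).add_const (Real.log a)).add
    (Real.tendsto_harmonic_sub_log.const_mul a)
  refine h2.congr ?_
  intro n
  unfold Real.BohrMollerup.logGammaSeq
  have e : ∑ i ∈ Finset.range n, bgv i a = Real.log (n.factorial)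
      - ∑ i ∈ Finset.range n, Real.log (a + (i + 1 : ℕ)) + a * harmonic n := by
    induction n with
    | zero => simp
    | succ k ih =>
      rw [Finset.sum_range_succ, ih, Finset.sum_range_succ, harmonic_succ, Nat.factorial_succ]
      unfold bgv
      have : (k.factorial : ℝ) ≠ 0 := by positivity
      have h' : ((k + 1 : ℕ) : ℝ) ≠ 0 := by positivity
      rw [Nat.cast_mul, Real.log_mul h' this]
      push_cast
      rw [show (k : ℝ) + 1 + a = a + (k + 1) by ring]
      ring
  rw [e, Finset.sum_range_succ']
  simp
  ring

theorem bgF_deriv (a : ℝ) (ha : 0 < a) : HasDerivAt bgF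
    (Real.log (Real.Gamma a) + a - 1 / 2 - Real.log (2 * π) / 2) a := by
  have hT : HasDerivAt (fun a => ∑' n, bgu n a) (∑' n, bgv n a) a :=
    hasDerivAt_tsum_of_isPreconnected (t := Set.Ioo 0 (a + 1)) (y₀ := a)
      (bg_sq_summable (a + 1)) isOpen_Ioo isPreconnected_Ioo
      (fun n y hy => bgu_deriv n y hy.1)
      (fun n y hy => (bgv_bound n y hy.1).trans (by
        have := hy.1
        have := hy.2
        gcongr)) ⟨ha, by linarith⟩ (bg_summable_u a ha) ⟨ha, by linarith⟩
  rw [bgv_tsum a ha] at hT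
  have := ((((hasDerivAt_id a).fun_mul (Real.hasDerivAt_log ha.ne')).fun_neg.fun_add
    ((hasDerivAt_id a).mul_const (1/2 - Real.log (2 * π) / 2))).fun_add
    (((hasDerivAt_pow 2 a).div_const 2).mul_const (1 - Real.eulerMascheroniConstant))).fun_add hT
  refine this.congr_deriv ?_
  simp only [id]
  field_simp
  push_cast
  ring

theorem bg_hurwitz_one : hurwitzZetaDerivNegOne 1 = deriv riemannZeta (-1) := by
  unfold hurwitzZetaDerivNegOne
  congr 1
  ext s
  unfold hurwitzZetaReal
  have : ((1 : ℝ) : UnitAddCircle) = 0 := AddCircle.coe_period 1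
  rw [this]
  simp [HurwitzZeta.hurwitzZeta_zero]

theorem bgF_one : bgF 1 = 0 := by
  have := bg_hurwitz 1 one_pos
  rw [bg_hurwitz_one] at this
  have h : (bgF 1 : ℂ) = 0 := by linear_combination -this
  exact_mod_cast h

theorem bgF_succ (a : ℝ) (ha : 0 < a) : bgF (a + 1) = bgF a + a * Real.log a := by
  have hc : 0 < ⌈a⌉₊ := Nat.ceil_pos.2 ha
  obtain ⟨m, hm⟩ : ∃ m, ⌈a⌉₊ = m + 1 := ⟨⌈a⌉₊ - 1, by omega⟩
  have h1 : ∀ s, hurwitzZetaReal s (a + 1) = hurwitzZetaReal s a - (a : ℂ) ^ (-s) := by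
    intro s
    unfold hurwitzZetaReal
    have hcc : ((a + 1 : ℝ) : UnitAddCircle) = a := AddCircle.coe_add_period 1 a
    rw [Nat.ceil_add_one ha.le, hm, hcc]
    simp only [Nat.add_sub_cancel]
    rw [Finset.sum_range_succ]
    push_cast
    rw [show (a : ℂ) + 1 - (m + 1 + 1 - 1) + m = a by ring,
      show (a : ℂ) + 1 - (m + 1 + 1 - 1) = a - (m + 1 - 1) by ring]
    ring
  have h0 : DifferentiableAt ℂ (fun s => hurwitzZetaReal s a) (-1) := by
    unfold hurwitzZetaReal
    refine (HurwitzZeta.differentiableAt_hurwitzZeta _ (by norm_num)).fun_sub ?_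
    apply DifferentiableAt.fun_sum
    intro k _
    refine DifferentiableAt.const_cpow (by fun_prop) (Or.inl ?_)
    have := Nat.ceil_lt_add_one ha.le
    have : (0:ℝ) < a - (⌈a⌉₊ - 1) + k := by
      have : (0:ℝ) ≤ k := by positivity
      linarith
    exact_mod_cast this.ne'
  have g0 : HasDerivAt (fun s : ℂ => -s) (-1) (-1) := (hasDerivAt_id (-1:ℂ)).neg
  have h2 := (h0.hasDerivAt.fun_sub (bg_const_cpow a ha _ _ g0)).deriv
  have h3 : hurwitzZetaDerivNegOne (a + 1) = hurwitzZetaDerivNegOne a + a * Real.log a := by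
    unfold hurwitzZetaDerivNegOne
    simp only [h1]
    rw [h2]
    simp
  rw [bg_hurwitz a ha, bg_hurwitz (a + 1) (by linarith)] at h3
  have : (bgF (a + 1) : ℂ) = bgF a + a * Real.log a := by linear_combination h3
  exact_mod_cast this

theorem bg_logG (z : ℝ) (hz : -1 < z) :
    logBarnesG (z + 1) = ((z * Real.log (Real.Gamma (z + 1)) - bgF (z + 1) : ℝ) : ℂ) := by
  unfold logBarnesG logBarnesG1p
  split_ifs with h
  · rw [bg_hurwitz (z + 1) (by linarith)]
    push_cast
    ring
  · have hz0 : 0 < z := by linarith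
    rw [add_sub_cancel_right, bg_hurwitz z hz0, bgF_succ z hz0, Real.Gamma_add_one hz0.ne',
      Real.log_mul hz0.ne' (Real.Gamma_pos_of_pos hz0).ne']
    push_cast
    ring

theorem bg_lgamma_deriv (x : ℝ) (hx : 0 < x) :
    HasDerivAt (fun t => Real.log (Real.Gamma t)) (digamma x) x := by
  have : DifferentiableAt ℝ (fun t => Real.log (Real.Gamma t)) x :=
    (Real.differentiableAt_Gamma (fun m => by
      have : (0:ℝ) ≤ m := by positivity
      linarith)).log (Real.Gamma_pos_of_pos hx).ne'
  exact this.hasDerivAt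

theorem bg_digamma_succ (x : ℝ) (hx : -1 < x) (hx0 : x ≠ 0) :
    digamma (x + 1) = digamma x + 1 / x := by
  have hnm : ∀ m : ℕ, x ≠ -m := by
    intro m hm
    rcases m with _ | m
    · simp at hm; exact hx0 hm
    · push_cast at hm
      have : (0:ℝ) ≤ m := by positivity
      linarith
  have hd : DifferentiableAt ℝ (fun t => Real.log (Real.Gamma t)) x :=
    (Real.differentiableAt_Gamma hnm).log (Real.Gamma_ne_zero hnm)
  have h1 : HasDerivAt (fun t => Real.log (Real.Gamma (t + 1))) (digamma (x + 1)) x :=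
    HasDerivAt.comp_add_const x 1 (bg_lgamma_deriv (x + 1) (by linarith))
  have h2 : HasDerivAt (fun t => Real.log (Real.Gamma t) + Real.log t) (digamma x + x⁻¹) x :=
    hd.hasDerivAt.fun_add (Real.hasDerivAt_log hx0)
  have h3 : (fun t => Real.log (Real.Gamma (t + 1))) =ᶠ[nhds x]
      (fun t => Real.log (Real.Gamma t) + Real.log t) := by
    have e1 : ∀ᶠ t in nhds x, t ≠ 0 := isOpen_ne.mem_nhds hx0
    have e2 : ∀ᶠ t in nhds x, -1 < t := lt_mem_nhds hx
    filter_upwards [e1, e2] with t ht0 ht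
    have : Real.Gamma t ≠ 0 := Real.Gamma_ne_zero (by
      intro m hm
      rcases m with _ | m
      · simp at hm; exact ht0 hm
      · push_cast at hm
        have : (0:ℝ) ≤ m := by positivity
        linarith)
    rw [Real.Gamma_add_one ht0, Real.log_mul ht0 this, add_comm]
  rw [one_div]
  exact (h1.congr_of_eventuallyEq h3.symm).unique h2

theorem bg_digamma_mono : MonotoneOn digamma (Set.Ioi 0) := by
  have := Real.convexOn_log_Gamma
  intro x hx y hy hxy
  exact this.monotoneOn_deriv (fun z hz => (bg_lgamma_deriv z hz).differentiableAt) hx hy hxy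

/-- log G(z+1) = z(1−z)/2 + (z/2) log(2π) + ∫₀^z x ψ(x) dx for z > −1. -/
theorem logBarnesG_eq_integral_digamma (z : ℝ) (hz : -1 < z) :
    logBarnesG (z + 1) =
      ((z * (1 - z) / 2 + z / 2 * Real.log (2 * π) : ℝ) : ℂ)
        + ((∫ x in (0 : ℝ)..z, x * digamma x : ℝ) : ℂ) := by
  have hsub : ∀ x ∈ Set.uIcc 0 z, -1 < x := by
    intro x hx
    have := hx.1
    have : min 0 z > -1 := lt_min (by norm_num) hz
    exact lt_of_lt_of_le this hx.1
  have hcongr : ∫ x in (0 : ℝ)..z, x * digamma x = ∫ x in (0 : ℝ)..z, (x * digamma (x + 1) - 1) := by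
    apply intervalIntegral.integral_congr_ae
    have : ∀ᵐ x : ℝ, x ≠ 0 := by simp [ae_iff]
    filter_upwards [this] with x hx0 hx
    rw [bg_digamma_succ x (hsub x (Set.uIoc_subset_uIcc hx)) hx0]
    field_simp
    ring
  have hint : IntervalIntegrable (fun x => x * digamma (x + 1) - 1) volume 0 z := by
    refine IntervalIntegrable.sub ?_ intervalIntegrable_const
    refine IntervalIntegrable.continuousOn_mul ?_ continuousOn_id
    apply MonotoneOn.intervalIntegrable
    intro x hx y hy hxy
    exact bg_digamma_mono (by have := hsub x hx; simp; linarith)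
      (by have := hsub y hy; simp; linarith) (by linarith)
  have hF := intervalIntegral.integral_eq_sub_of_hasDerivAt
    (f := fun x => x * Real.log (Real.Gamma (x + 1)) - bgF (x + 1)
      - (x * (1 - x) / 2 + x / 2 * Real.log (2 * π)))
    (f' := fun x => x * digamma (x + 1) - 1) (a := 0) (b := z) (by
      intro x hx
      have hx1 := hsub x hx
      have h1 : HasDerivAt (fun t => Real.log (Real.Gamma (t + 1))) (digamma (x + 1)) x :=
        HasDerivAt.comp_add_const x 1 (bg_lgamma_deriv (x + 1) (by linarith))
      have h2 := HasDerivAt.comp_add_const x 1 (bgF_deriv (x + 1) (by linarith))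
      have h3 := (((hasDerivAt_id x).fun_mul h1).fun_sub h2).fun_sub
        ((((hasDerivAt_id x).fun_mul ((hasDerivAt_id x).const_sub 1)).div_const 2).fun_add
          (((hasDerivAt_id x).div_const 2).mul_const (Real.log (2 * π))))
      refine h3.congr_deriv ?_
      simp only [id]
      ring) hint
  rw [bg_logG z hz, hcongr, hF]
  norm_cast
  simp [bgF_one]
end

section
/- The logarithm of the Glaisher–Kinkelin constant admits the series representation log A = (log 2)/12 + (1/36) ∑_{k=1}^∞ (ζ(2k+1) − 1)·( 28 + 3/(1+k) − 6/(2+k) ), where ζ is the Riemann zeta function. -/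
open Real MeasureTheory Filter

lemma partialId (N : ℕ) :
  ∑ i ∈ Finset.range N, (28 / (((i:ℝ)+2)*(((i:ℝ)+2)^2-1)) + (6*((i:ℝ)+2)^3-3*((i:ℝ)+2)) * Real.log (1 - 1/((i:ℝ)+2)^2) + 6*((i:ℝ)+2))
  = ∑ i ∈ Finset.range N, (-18) * ( -((i:ℝ)+1+1/2) - ((i:ℝ)+1)*Real.log ((i:ℝ)+1) - ((i:ℝ)+2)*Real.log ((i:ℝ)+2)
     + (1/6)*(Real.log ((i:ℝ)+2) - Real.log ((i:ℝ)+1)) + ((i:ℝ)+2)^2*Real.log ((i:ℝ)+2) - ((i:ℝ)+1)^2*Real.log ((i:ℝ)+1))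
   + (7 - 14/(((N:ℝ)+1)*((N:ℝ)+2)) + (6*((N:ℝ)+1)^3-3*((N:ℝ)+1))*(Real.log ((N:ℝ)+2) - Real.log ((N:ℝ)+1)) - 3*Real.log 2 - 6*((N:ℝ)+1)^2+3*((N:ℝ)+1)+3) := by
  induction N with
  | zero => simp; ring
  | succ N ih =>
    rw [Finset.sum_range_succ, Finset.sum_range_succ, ih]
    have h : Real.log (1 - 1/((N:ℝ)+2)^2) = Real.log ((N:ℝ)+1) + Real.log ((N:ℝ)+3) - 2*Real.log ((N:ℝ)+2) := by
      have : (1 - 1/((N:ℝ)+2)^2) = ((N:ℝ)+1) * ((N:ℝ)+3) / ((N:ℝ)+2)^2 := by field_simp; ring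
      rw [this, Real.log_div (by positivity) (by positivity), Real.log_mul (by positivity) (by positivity), Real.log_pow]
      norm_num
    rw [h]
    push_cast
    rw [show (N:ℝ)+1+1 = N+2 by ring, show (N:ℝ)+1+2 = N+3 by ring]
    have e : 28 / (((N:ℝ)+2)*(((N:ℝ)+2)^2-1)) = 14/(((N:ℝ)+1)*((N:ℝ)+2)) - 14/(((N:ℝ)+2)*((N:ℝ)+3)) := by
      rw [show ((N:ℝ)+2)^2-1 = (N+1)*(N+3) by ring]
      field_simp; ring
    rw [e]; ring

lemma limLog : Tendsto (fun N : ℕ => (7 - 14/(((N:ℝ)+1)*((N:ℝ)+2)) + (6*((N:ℝ)+1)^3-3*((N:ℝ)+1))*(Real.log ((N:ℝ)+2) - Real.log ((N:ℝ)+1)) - 3*Real.log 2 - 6*((N:ℝ)+1)^2+3*((N:ℝ)+1)+3)) atTop (nhds (9 - 3*Real.log 2)) := by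
  rw [tendsto_iff_norm_sub_tendsto_zero]
  have h0 : Tendsto (fun N : ℕ => 50 * (1/((N:ℝ)+1))) atTop (nhds 0) := by
    simpa using (tendsto_one_div_add_atTop_nhds_zero_nat (𝕜 := ℝ)).const_mul 50
  refine squeeze_zero' (Eventually.of_forall fun _ => norm_nonneg _) ?_ h0
  filter_upwards [eventually_ge_atTop 1] with N hN
  have hN' : (1:ℝ) ≤ N := by exact_mod_cast hN
  set y : ℝ := 1/((N:ℝ)+1) with hy
  have hyp : 0 < y := by positivity
  have hy2 : y ≤ 1/2 := by rw [hy]; apply one_div_le_one_div_of_le <;> linarith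
  have hM : (N:ℝ)+1 = 1/y := by rw [hy]; field_simp
  have hl : Real.log ((N:ℝ)+2) - Real.log ((N:ℝ)+1) = Real.log (1+y) := by
    rw [← Real.log_div (by positivity) (by positivity)]; congr 1; rw [hy]; field_simp; ring
  have hb := Real.abs_log_sub_add_sum_range_le (x := -y) (by rw [abs_neg, abs_of_pos hyp]; linarith) 3
  simp only [Finset.sum_range_succ, Finset.sum_range_zero, abs_neg, abs_of_pos hyp, sub_neg_eq_add] at hb
  norm_num at hb
  obtain ⟨r, hr⟩ : ∃ r, r = Real.log (1+y) - (y - y^2/2 + y^3/3) := ⟨_, rfl⟩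
  have hb2 : |r| ≤ 2 * y^4 := by
    have : y^4/(1-y) ≤ 2*y^4 := by
      rw [div_le_iff₀ (by linarith)]; nlinarith [pow_pos hyp 4]
    refine le_trans (le_of_eq ?_) (hb.trans this)
    rw [hr]; congr 1; ring
  have hr' : Real.log (1+y) = r + (y - y^2/2 + y^3/3) := by rw [hr]; ring
  rw [hl, hr', show (N:ℝ)+2 = 1/y+1 by linarith, hM]
  have key : (7 - 14/(1/y*(1/y+1)) + (6*(1/y)^3-3*(1/y))*(r + (y - y^2/2 + y^3/3)) - 3*Real.log 2 - 6*(1/y)^2+3*(1/y)+3) - (9 - 3*Real.log 2)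
    = -14*y^2/(1+y) - y^2 +3/2*y + (6/y^3 - 3/y)*r := by
    field_simp; ring
  rw [key, Real.norm_eq_abs]
  have h1 : |(6/y^3 - 3/y)*r| ≤ 12*y := by
    rw [abs_mul]
    have : |6/y^3-3/y| ≤ 6/y^3 := by
      rw [abs_le]
      have e : 3/y ≤ 6/y^3 := by
        rw [div_le_div_iff₀ hyp (by positivity)]; nlinarith [pow_pos hyp 2, pow_pos hyp 3]
      have : 0 < 3/y := by positivity
      constructor <;> linarith
    calc _ ≤ 6/y^3 * (2*y^4) := by gcongr
      _ = _ := by field_simp; ring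
  have h2 : 14*y^2/(1+y) ≤ 14*y^2 := by
    rw [div_le_iff₀ (by linarith)]; nlinarith [pow_pos hyp 2, pow_pos hyp 3]
  have h2' : 0 ≤ 14*y^2/(1+y) := by positivity
  rw [neg_mul, neg_div]
  rw [abs_le] at h1 ⊢
  constructor <;> nlinarith


/-- double series term -/
noncomputable def dterm (k i : ℕ) : ℝ := (1/((i:ℝ)+2)^(2*k+3)) * (28 + 3/((k:ℝ)+2) - 6/((k:ℝ)+3))

lemma dterm_summable : Summable (Function.uncurry dterm) := by
  have h1 : Summable (fun k : ℕ => 31 * ((1/4:ℝ))^k) :=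
    (summable_geometric_of_lt_one (by norm_num) (by norm_num)).mul_left 31
  have h2 : Summable (fun i : ℕ => 1/((i:ℝ)+2)^3) := by
    have := (summable_nat_add_iff 2).mpr (Real.summable_one_div_nat_pow.mpr (by norm_num : 1 < 3))
    simpa using this
  have h := h1.mul_of_nonneg h2 (fun k => by positivity) (fun i => by positivity)
  refine Summable.of_norm_bounded h ?_
  rintro ⟨k, i⟩
  simp only [Function.uncurry, dterm]
  have c1 : 3/((k:ℝ)+2) ≤ 3 := by rw [div_le_iff₀ (by positivity)]; nlinarith [(Nat.cast_nonneg k : (0:ℝ) ≤ k)]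
  have c2 : 6/((k:ℝ)+3) ≤ 6 := by rw [div_le_iff₀ (by positivity)]; nlinarith [(Nat.cast_nonneg k : (0:ℝ) ≤ k)]
  have c3 : 0 ≤ 3/((k:ℝ)+2) := by positivity
  have c4 : 0 ≤ 6/((k:ℝ)+3) := by positivity
  have c : |28 + 3/((k:ℝ)+2) - 6/((k:ℝ)+3)| ≤ 31 := by rw [abs_le]; constructor <;> linarith
  have d : |1/((i:ℝ)+2)^(2*k+3)| ≤ (1/4)^k * (1/((i:ℝ)+2)^3) := by
    rw [abs_of_pos (by positivity), pow_add, pow_mul, one_div_pow, ← one_div_mul_one_div]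
    gcongr
    nlinarith [(Nat.cast_nonneg i : (0:ℝ) ≤ i)]
  rw [Real.norm_eq_abs, abs_mul]
  calc _ ≤ ((1/4)^k * (1/((i:ℝ)+2)^3)) * 31 := by gcongr
    _ = _ := by ring

lemma dterm_inner (i : ℕ) : HasSum (fun k => dterm k i) (28 / (((i:ℝ)+2)*(((i:ℝ)+2)^2-1)) + (6*((i:ℝ)+2)^3-3*((i:ℝ)+2)) * Real.log (1 - 1/((i:ℝ)+2)^2) + 6*((i:ℝ)+2)) := by
  set m : ℝ := (i:ℝ)+2 with hm
  have hm2 : 2 ≤ m := by rw [hm]; linarith [(Nat.cast_nonneg i : (0:ℝ) ≤ i)]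
  have hmp : 0 < m := by linarith
  have hx : |1/m^2| < 1 := by
    rw [abs_of_pos (by positivity), div_lt_one (by positivity)]; nlinarith
  have hm1 : m^2 - 1 ≠ 0 := by nlinarith
  have g := (hasSum_geometric_of_abs_lt_one hx).mul_left (28/m^3)
  have l := Real.hasSum_pow_div_log_of_abs_lt_one hx
  have l1 := ((hasSum_nat_add_iff' 1).mpr l).mul_left (3*m)
  have l2 := ((hasSum_nat_add_iff' 2).mpr l).mul_left (6*m^3)
  have := (g.add l1).sub l2
  convert! this using 1
  · funext k
    simp only [dterm, ← hm]
    push_cast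
    rw [show (k:ℝ)+1+1 = k+2 by ring, show (k:ℝ)+2+1 = k+3 by ring]
    simp only [one_div_pow, ← pow_mul]
    rw [show 2*(k+1+1) = 2*k+4 by ring, show 2*(k+2+1) = 2*k+6 by ring]
    simp only [pow_add]
    field_simp
  · simp only [Finset.sum_range_succ, Finset.sum_range_zero]
    have : (1 - 1/m^2)⁻¹ = m^2/(m^2-1) := by
      have : 1 - 1/m^2 = (m^2-1)/m^2 := by field_simp
      rw [this, inv_div]
    rw [this]
    push_cast
    field_simp
    ring

lemma zeta_inner (k : ℕ) : HasSum (fun i => (dterm k i : ℂ)) ((riemannZeta (2 * ((k : ℂ) + 1) + 1) - 1)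
        * (28 + 3 / ((k : ℂ) + 2) - 6 / ((k : ℂ) + 3))) := by
  have e : (2 * ((k : ℂ) + 1) + 1) = ((2*k+3 : ℕ) : ℂ) := by push_cast; ring
  rw [e, zeta_nat_eq_tsum_of_gt_one (by omega)]
  have hs : Summable (fun n : ℕ => 1/(n:ℂ)^(2*k+3)) := by
    have := (Real.summable_one_div_nat_pow (p := 2*k+3)).mpr (by omega)
    have := (Complex.ofRealCLM.summable this)
    simpa using this
  have h := ((hasSum_nat_add_iff' 2).mpr hs.hasSum).mul_right (28 + 3 / ((k : ℂ) + 2) - 6 / ((k : ℂ) + 3))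
  convert! h using 1
  · funext i; simp [dterm]
  · simp [Finset.sum_range_succ]

lemma series_main : HasSum (fun i : ℕ => (28 / (((i:ℝ)+2)*(((i:ℝ)+2)^2-1)) + (6*((i:ℝ)+2)^3-3*((i:ℝ)+2)) * Real.log (1 - 1/((i:ℝ)+2)^2) + 6*((i:ℝ)+2))) (∑' k, ∑' i, dterm k i) := by
  have hs := dterm_summable
  rw [← hs.tsum_comm]
  have h2 := hs.prod_symm.prod
  convert! h2.hasSum using 1
  funext i
  exact (dterm_inner i).tsum_eq.symm

lemma series_cplx : ∑' k : ℕ, (riemannZeta (2 * ((k : ℂ) + 1) + 1) - 1)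
        * (28 + 3 / ((k : ℂ) + 2) - 6 / ((k : ℂ) + 3)) = ((∑' k, ∑' i, dterm k i : ℝ) : ℂ) := by
  rw [Complex.ofReal_tsum]
  congr 1; funext k
  rw [Complex.ofReal_tsum, (zeta_inner k).tsum_eq]


/-- Euler-Maclaurin term -/
noncomputable def emT (n : ℕ) (s : ℂ) : ℂ :=
  (1-s) * (((((n+1:ℕ):ℝ):ℂ)^(-s) + ((((n+1:ℕ):ℝ)+1:ℝ):ℂ)^(-s))/2
     + s * (((((n+1:ℕ):ℝ)+1:ℝ):ℂ)^(-s-1) - (((n+1:ℕ):ℝ):ℂ)^(-s-1))/12)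
   - (((((n+1:ℕ):ℝ)+1:ℝ):ℂ)^(1-s) - (((n+1:ℕ):ℝ):ℂ)^(1-s))

lemma hasDerivAt_cpow' (x : ℝ) (hx : 0 < x) (r : ℂ) :
    HasDerivAt (fun y : ℝ => (y : ℂ) ^ r) (r * (x:ℂ) ^ (r - 1)) x := by
  by_cases hr : r = 0
  · subst hr; simpa using hasDerivAt_const x (1:ℂ)
  · exact hasDerivAt_ofReal_cpow_const hx.ne' hr

lemma emT_bound (n : ℕ) (s : ℂ) (hs : -3 ≤ s.re) :
    ‖emT n s‖ ≤ ‖(1-s)*s*(s+1)*(s+2)‖ * ((n+1:ℕ):ℝ)^(-s.re-3) := by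
  set a : ℝ := ((n+1:ℕ):ℝ) with ha
  have hap : 0 < a := by rw [ha]; positivity
  let G : ℝ → ℂ := fun x => (1-s)*( ((((x-a)^3 - 3/2*(x-a)^2+1/2*(x-a))/6:ℝ):ℂ) * (s*(s+1)*(x:ℂ)^(-s-2))
     + ((((x-a)^2-(x-a)+1/6)/2:ℝ):ℂ) * (s*(x:ℂ)^(-s-1)) + (((x-a)-1/2:ℝ):ℂ)*(x:ℂ)^(-s)) - (x:ℂ)^(1-s)
  let G' : ℝ → ℂ := fun x => -((1-s)*s*(s+1)*(s+2)) * ((((x-a)^3 - 3/2*(x-a)^2+1/2*(x-a))/6:ℝ):ℂ) * (x:ℂ)^(-s-3)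
  have hG : ∀ x ∈ Set.Icc a (a+1), HasDerivWithinAt G (G' x) (Set.Icc a (a+1)) x := by
    intro x hx
    have hxp : 0 < x := lt_of_lt_of_le hap hx.1
    apply HasDerivAt.hasDerivWithinAt
    have d0 : HasDerivAt (fun x : ℝ => x - a) 1 x := (hasDerivAt_id x).sub_const a
    have d1 : HasDerivAt (fun x : ℝ => ((x-a)^3 - 3/2*(x-a)^2+1/2*(x-a))/6) (((x-a)^2-(x-a)+1/6)/2) x := by
      convert! ((((d0.pow 3).sub ((d0.pow 2).const_mul (3/2))).add (d0.const_mul (1/2))).div_const 6) using 1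
      simp; ring
    have d2 : HasDerivAt (fun x : ℝ => ((x-a)^2-(x-a)+1/6)/2) ((x-a)-1/2) x := by
      convert! ((((d0.pow 2).sub d0).add_const (1/6)).div_const 2) using 1
      simp; ring
    have d3 : HasDerivAt (fun x : ℝ => (x-a)-1/2) 1 x := d0.sub_const _
    have p2 := (hasDerivAt_cpow' x hxp (-s-2)).const_mul (s*(s+1))
    have p1 := (hasDerivAt_cpow' x hxp (-s-1)).const_mul s
    have p0 := (hasDerivAt_cpow' x hxp (-s))
    have pm := (hasDerivAt_cpow' x hxp (1-s))
    have := ((((d1.ofReal_comp.mul p2).add (d2.ofReal_comp.mul p1)).add (d3.ofReal_comp.mul p0)).const_mul (1-s)).sub pm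
    convert! this using 1
    simp only [G']
    rw [show -s-2-1 = -s-3 by ring, show -s-1-1 = -s-2 by ring, show 1-s-1 = -s by ring]
    push_cast
    ring
  have hb : ∀ x ∈ Set.Ico a (a+1), ‖G' x‖ ≤ ‖(1-s)*s*(s+1)*(s+2)‖ * a^(-s.re-3) := by
    intro x hx
    have hxp : 0 < x := lt_of_lt_of_le hap hx.1
    simp only [G']
    rw [norm_mul, norm_mul, norm_neg, Complex.norm_cpow_eq_rpow_re_of_pos hxp, Complex.norm_real, mul_assoc]
    have h1 : x ^ (-s-3).re ≤ a^(-s.re-3) := by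
      have : (-s-3).re = -s.re-3 := by simp
      rw [this]
      exact Real.rpow_le_rpow_of_nonpos hap hx.1 (by linarith)
    have h2 : ‖((x-a)^3 - 3/2*(x-a)^2+1/2*(x-a))/6‖ ≤ 1 := by
      have u0 : 0 ≤ x - a := by linarith [hx.1]
      have u1 : x - a ≤ 1 := by linarith [hx.2]
      generalize x - a = u at *
      have u2 : u^2 ≤ 1 := by nlinarith
      have u3 : u^3 ≤ 1 := by nlinarith [pow_nonneg u0 2]
      have := pow_nonneg u0 2
      have := pow_nonneg u0 3
      rw [Real.norm_eq_abs, abs_le]; constructor <;> linarith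
    calc _ ≤ ‖(1-s)*s*(s+1)*(s+2)‖ * (1 * a^(-s.re-3)) := by gcongr
      _ = _ := by ring
  have := norm_image_sub_le_of_norm_deriv_le_segment' hG hb (a+1) ⟨by linarith, le_rfl⟩
  rw [show a+1-a = 1 by ring, mul_one] at this
  refine le_trans (le_of_eq ?_) this
  congr 1
  simp only [G, emT, ← ha, show a+1-a = 1 by ring, sub_self]
  push_cast
  ring

lemma emT_diff (n : ℕ) : Differentiable ℂ (emT n) := by
  have h1 : (((n+1:ℕ):ℝ):ℂ) ≠ 0 := by exact_mod_cast Nat.succ_ne_zero n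
  have h2 : ((((n+1:ℕ):ℝ)+1:ℝ):ℂ) ≠ 0 := by
    rw [Complex.ofReal_ne_zero]; positivity
  have : ∀ c : ℂ, c ≠ 0 → ∀ f : ℂ → ℂ, Differentiable ℂ f → Differentiable ℂ (fun s => c ^ (f s)) := by
    intro c hc f hf
    exact hf.const_cpow (Or.inl hc)
  unfold emT
  have a1 := this _ h1 (fun s => -s) (by fun_prop)
  have a2 := this _ h2 (fun s => -s) (by fun_prop)
  have a3 := this _ h1 (fun s => -s-1) (by fun_prop)
  have a4 := this _ h2 (fun s => -s-1) (by fun_prop)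
  have a5 := this _ h1 (fun s => 1-s) (by fun_prop)
  have a6 := this _ h2 (fun s => 1-s) (by fun_prop)
  fun_prop

lemma emT_deriv (n : ℕ) : deriv (emT n) (-1) = (( -((n:ℝ)+1+1/2) - ((n:ℝ)+1)*Real.log ((n:ℝ)+1) - ((n:ℝ)+2)*Real.log ((n:ℝ)+2)
     + (1/6)*(Real.log ((n:ℝ)+2) - Real.log ((n:ℝ)+1)) + ((n:ℝ)+2)^2*Real.log ((n:ℝ)+2) - ((n:ℝ)+1)^2*Real.log ((n:ℝ)+1) : ℝ) : ℂ) := by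
  apply HasDerivAt.deriv
  obtain ⟨a, ha⟩ : ∃ a : ℝ, a = ((n+1:ℕ):ℝ) := ⟨_, rfl⟩
  have hap : 0 < a := by rw [ha]; positivity
  have e1 : (n:ℝ)+1 = a := by rw [ha]; push_cast; ring
  have e2 : (n:ℝ)+2 = a+1 := by rw [ha]; push_cast; ring
  have P : ∀ c : ℝ, 0 < c → ∀ f : ℂ → ℂ, HasDerivAt f (-1) (-1) → HasDerivAt (fun s => (c:ℂ) ^ (f s)) ((c:ℂ)^(f (-1)) * (Real.log c : ℂ) * (-1)) (-1) := by
    intro c hc f hf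
    have := hf.const_cpow (c := (c:ℂ)) (Or.inl (by exact_mod_cast hc.ne'))
    rwa [← Complex.ofReal_log hc.le] at this
  have i0 : HasDerivAt (fun s : ℂ => s) 1 (-1) := hasDerivAt_id _
  have i1 : HasDerivAt (fun s : ℂ => -s) (-1) (-1) := i0.neg
  have i2 : HasDerivAt (fun s : ℂ => -s-1) (-1) (-1) := i1.sub_const 1
  have i3 : HasDerivAt (fun s : ℂ => 1-s) (-1) (-1) := i0.const_sub 1
  have hb : 0 < a+1 := by linarith
  have := (i3.mul ((((P a hap _ i1).add (P (a+1) hb _ i1)).div_const 2).add ((i0.mul ((P (a+1) hb _ i2).sub (P a hap _ i2))).div_const 12))).sub ((P (a+1) hb _ i3).sub (P a hap _ i3))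
  unfold emT
  simp only [← ha]
  convert! this using 1
  rw [e1, e2]
  simp only [neg_neg, sub_self, Complex.cpow_zero, Complex.cpow_one, show (1:ℂ) - -1 = ((2:ℕ):ℂ) by norm_num, Complex.cpow_natCast]
  simp only [Pi.add_apply, Pi.sub_apply, Pi.mul_apply, neg_neg, sub_self, Complex.cpow_zero, Complex.cpow_one, show (1:ℂ) - -1 = ((2:ℕ):ℂ) by norm_num, Complex.cpow_natCast]
  have : (n:ℝ)= a - 1 := by linarith
  push_cast
  ring

lemma emT_summable (s : ℂ) (hs : -2 < s.re) : Summable (fun n => emT n s) := by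
  have : Summable (fun n : ℕ => ((n+1:ℕ):ℝ)^(-s.re-3)) :=
    (summable_nat_add_iff (f := fun n : ℕ => (n:ℝ)^(-s.re-3)) 1).mpr (Real.summable_nat_rpow.mpr (by linarith))
  exact Summable.of_norm_bounded (this.mul_left _) (fun n => emT_bound n s (by linarith))

lemma cpow_tendsto_zero (r : ℂ) (hr : r.re < 0) : Tendsto (fun N : ℕ => (((N+1:ℕ):ℝ):ℂ)^r) atTop (nhds 0) := by
  rw [tendsto_zero_iff_norm_tendsto_zero]
  have h := (tendsto_rpow_neg_atTop (y := -r.re) (by linarith)).comp (tendsto_natCast_atTop_atTop (R := ℝ))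
  have := (tendsto_add_atTop_iff_nat 1).mpr h
  refine this.congr fun N => ?_
  rw [Complex.norm_cpow_eq_rpow_re_of_pos (by positivity)]
  simp

lemma zeta_eq_of_one_lt (s : ℂ) (hs : 1 < s.re) :
    (1-s) * riemannZeta s = (1-s)*(1/2+s/12) - 1 + ∑' n, emT n s := by
  have hp : ∀ N : ℕ, ∑ n ∈ Finset.range N, emT n s = (1-s)*(∑ n ∈ Finset.range N, 1/((n:ℂ)+1)^s - 1/2
      + (((N+1:ℕ):ℝ):ℂ)^(-s)/2 + s*((((N+1:ℕ):ℝ):ℂ)^(-s-1) - 1)/12) - ((((N+1:ℕ):ℝ):ℂ)^(1-s) - 1) := by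
    intro N
    induction N with
    | zero => simp; 
    | succ N ih =>
      rw [Finset.sum_range_succ, ih, Finset.sum_range_succ, emT]
      rw [show 1/((N:ℂ)+1)^s = (((N+1:ℕ):ℝ):ℂ)^(-s) by rw [Complex.cpow_neg]; push_cast; rw [one_div]]
      rw [show ((((N+1:ℕ):ℝ)+1:ℝ):ℂ) = (((N+1+1:ℕ):ℝ):ℂ) by push_cast; ring]
      ring
  have t1 := (emT_summable s (by linarith)).hasSum.tendsto_sum_nat
  have hz : Summable (fun n : ℕ => 1/((n:ℂ)+1)^s) := by
    have := (summable_nat_add_iff 1).mpr (Complex.summable_one_div_nat_cpow.mpr hs)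
    simpa using this
  have t2 := hz.hasSum.tendsto_sum_nat
  rw [← zeta_eq_tsum_one_div_nat_add_one_cpow hs] at t2
  have z1 := cpow_tendsto_zero (-s) (by simp; linarith)
  have z2 := cpow_tendsto_zero (-s-1) (by simp; linarith)
  have z3 := cpow_tendsto_zero (1-s) (by simp; linarith)
  have t3 := (((((t2.sub_const (1/2)).add (z1.div_const 2)).add (((z2.sub_const 1).const_mul s).div_const 12)).const_mul (1-s)).sub (z3.sub_const 1))
  have := tendsto_nhds_unique t1 (t3.congr fun N => (hp N).symm)
  rw [this]; ring


lemma emT_ball : DifferentiableOn ℂ (fun s => ∑' n, emT n s) (Metric.ball (1:ℂ) (9/4)) ∧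
    HasSum (fun n => deriv (emT n) (-1)) (deriv (fun s => ∑' n, emT n s) (-1)) := by
  have hu : Summable (fun n : ℕ => (1000:ℝ) * ((n+1:ℕ):ℝ)^(-(7/4:ℝ))) :=
    ((summable_nat_add_iff (f := fun n : ℕ => (n:ℝ)^(-(7/4:ℝ))) 1).mpr (Real.summable_nat_rpow.mpr (by norm_num))).mul_left 1000
  have hb : ∀ (n : ℕ) (s : ℂ), s ∈ Metric.ball (1:ℂ) (9/4) → ‖emT n s‖ ≤ (1000:ℝ) * ((n+1:ℕ):ℝ)^(-(7/4:ℝ)) := by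
    intro n s hs
    rw [Metric.mem_ball, dist_eq_norm] at hs
    have hre : -(9/4) < s.re - 1 := by
      have := (abs_le.mp (Complex.abs_re_le_norm (s-1))).1
      simp at this; linarith
    refine (emT_bound n s (by linarith)).trans ?_
    have n1 : ‖1-s‖ ≤ 9/4 := by rw [norm_sub_rev]; exact hs.le
    have n2 : ‖s‖ ≤ 13/4 := by
      have := norm_add_le (s-1) 1
      simp at this; linarith
    have n3 : ‖s+1‖ ≤ 17/4 := by
      have := norm_add_le s 1
      simp at this; linarith
    have n4 : ‖s+2‖ ≤ 21/4 := by
      have := norm_add_le s 2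
      simp at this; linarith
    have n5 : ‖(1-s)*s*(s+1)*(s+2)‖ ≤ 1000 := by
      rw [norm_mul, norm_mul, norm_mul]
      calc _ ≤ (9/4:ℝ)*(13/4)*(17/4)*(21/4) := by gcongr
        _ ≤ 1000 := by norm_num
    have n6 : ((n+1:ℕ):ℝ)^(-s.re-3) ≤ ((n+1:ℕ):ℝ)^(-(7/4:ℝ)) := by
      apply Real.rpow_le_rpow_of_exponent_le
      · push_cast; linarith [(Nat.cast_nonneg n : (0:ℝ) ≤ n)]
      · linarith
    gcongr
  have hmem : (-1:ℂ) ∈ Metric.ball (1:ℂ) (9/4) := by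
    rw [Metric.mem_ball, dist_eq_norm]; norm_num
  exact ⟨Complex.differentiableOn_tsum_of_summable_norm hu (fun n => (emT_diff n).differentiableOn) Metric.isOpen_ball hb,
    Complex.hasSum_deriv_of_summable_norm hu (fun n => (emT_diff n).differentiableOn) Metric.isOpen_ball hb hmem⟩


lemma zeta_eq_ball : Set.EqOn (fun s => -riemannZeta₁ s) (fun s => (1-s)*(1/2+s/12) - 1 + ∑' n, emT n s) (Metric.ball (1:ℂ) (9/4)) := by
  have hd := emT_ball.1
  have h1 : AnalyticOnNhd ℂ (fun s => -riemannZeta₁ s) (Metric.ball (1:ℂ) (9/4)) :=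
    (differentiable_riemannZeta₁.neg.differentiableOn).analyticOnNhd Metric.isOpen_ball
  have h2 : AnalyticOnNhd ℂ (fun s => (1-s)*(1/2+s/12) - 1 + ∑' n, emT n s) (Metric.ball (1:ℂ) (9/4)) := by
    refine DifferentiableOn.analyticOnNhd ?_ Metric.isOpen_ball
    exact DifferentiableOn.add (by fun_prop) hd
  refine h1.eqOn_of_preconnected_of_eventuallyEq h2 (convex_ball _ _).isPreconnected (z₀ := 2) (by simp [dist_eq_norm]; norm_num) ?_
  have : {s : ℂ | 1 < s.re} ∈ nhds (2:ℂ) :=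
    (isOpen_lt continuous_const Complex.continuous_re).mem_nhds (by simp)
  filter_upwards [this] with s hs
  have hs1 : s ≠ 1 := by rintro rfl; simp at hs
  rw [← zeta_eq_of_one_lt s hs, riemannZeta_eq_inv_sub_mul hs1]
  have : s - 1 ≠ 0 := sub_ne_zero.mpr hs1
  field_simp
  ring

lemma zeta_deriv : ∃ S : ℝ, HasSum (fun n : ℕ => ( -((n:ℝ)+1+1/2) - ((n:ℝ)+1)*Real.log ((n:ℝ)+1) - ((n:ℝ)+2)*Real.log ((n:ℝ)+2)
     + (1/6)*(Real.log ((n:ℝ)+2) - Real.log ((n:ℝ)+1)) + ((n:ℝ)+2)^2*Real.log ((n:ℝ)+2) - ((n:ℝ)+1)^2*Real.log ((n:ℝ)+1))) S ∧ deriv riemannZeta (-1) = (-1/3 + (S:ℂ))/2 := by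
  have hs := emT_ball.2
  simp only [emT_deriv] at hs
  obtain ⟨S, hS⟩ : ∃ S : ℝ, HasSum (fun n : ℕ => ( -((n:ℝ)+1+1/2) - ((n:ℝ)+1)*Real.log ((n:ℝ)+1) - ((n:ℝ)+2)*Real.log ((n:ℝ)+2)
     + (1/6)*(Real.log ((n:ℝ)+2) - Real.log ((n:ℝ)+1)) + ((n:ℝ)+2)^2*Real.log ((n:ℝ)+2) - ((n:ℝ)+1)^2*Real.log ((n:ℝ)+1))) S :=
    Complex.summable_ofReal.mp hs.summable
  refine ⟨S, hS, ?_⟩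
  have hSd := hs.unique (Complex.hasSum_ofReal.mpr hS)
  have hmem : (-1:ℂ) ∈ Metric.ball (1:ℂ) (9/4) := by
    rw [Metric.mem_ball, dist_eq_norm]; norm_num
  have hnh := Metric.isOpen_ball.mem_nhds hmem
  have hev : (fun s => (1-s)*riemannZeta s) =ᶠ[nhds (-1:ℂ)] (fun s => (1-s)*(1/2+s/12) - 1 + ∑' n, emT n s) := by
    filter_upwards [hnh, isOpen_ne.mem_nhds (show (-1:ℂ) ≠ 1 by norm_num)] with s hs hs1
    refine Eq.trans ?_ (zeta_eq_ball hs)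
    simp only
    rw [riemannZeta_eq_inv_sub_mul hs1]
    have : s - 1 ≠ 0 := sub_ne_zero.mpr hs1
    field_simp
    ring
  have hdz : HasDerivAt riemannZeta (deriv riemannZeta (-1)) (-1) :=
    (differentiableAt_riemannZeta (by norm_num)).hasDerivAt
  have i0 : HasDerivAt (fun s : ℂ => s) 1 (-1) := hasDerivAt_id _
  have i3 : HasDerivAt (fun s : ℂ => 1-s) (-1) (-1) := i0.const_sub 1
  have hl := i3.mul hdz
  have hT : HasDerivAt (fun s => ∑' n, emT n s) (S:ℂ) (-1) := by
    rw [← hSd]; exact (emT_ball.1.differentiableAt hnh).hasDerivAt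
  have hr := ((i3.mul ((i0.div_const 12).const_add (1/2))).sub_const 1).add hT
  have heq := (hl.congr_of_eventuallyEq hev.symm).unique hr
  have hz : riemannZeta (-1) = -1/12 := by
    have := riemannZeta_neg_nat_eq_bernoulli' 1
    rw [show (1+1:ℕ) = 2 from rfl, bernoulli'_two] at this
    push_cast at this
    rw [this]; norm_num
  rw [hz] at heq
  linear_combination heq/2


/-- Series representation of log A in terms of ζ(2k+1), k ≥ 1. -/
theorem logA_eq_series :
    logA = (Real.log 2) / 12 + (1 / 36) * ∑' k : ℕ,
      (riemannZeta (2 * ((k : ℂ) + 1) + 1) - 1)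
        * (28 + 3 / ((k : ℂ) + 2) - 6 / ((k : ℂ) + 3)) := by
  obtain ⟨S, hS, hz⟩ := zeta_deriv
  have t1 := series_main.tendsto_sum_nat
  have t2 := ((hS.mul_left (-18)).tendsto_sum_nat.add limLog)
  have h := tendsto_nhds_unique t1 (t2.congr fun N => (partialId N).symm)
  rw [series_cplx, h, logA, hz]
  push_cast
  ring
end
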